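/- Let 𝛑 be a policy ensemble with α ↦ π^α Lipschitz continuous up to finitely many discontinuities, and 𝛍 = Ψ(𝛑). Under Assumption (W) and Lipschitz continuity of P, for the N-agent policy tuple (π¹,…,π^{i−1},π̂,π^{i+1},…,π^N) with (π¹,…,π^N) = Γ_N(𝛑) and any deviation π̂ ∈ Π by agent i, for every t ∈ 𝒯 and every measurable f : 𝒳×[0,1] → ℝ with |f| ≤ M_f, one has E[ |𝛍^N_t(f) − 𝛍_t(f)| ] → 0 as N → ∞, uniformly over all deviations π̂ ∈ Π and i ∈ 𝒱_N. Moreover, if the convergence ‖W_N − W‖_{L∞→L1} → 0 is at rate O(1/√N), then this convergence is also at rate O(1/√N). -/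

import Mathlib

open MeasureTheory Filter
open scoped BigOperators

namespace GMFG

variable {𝒳 𝒰 : Type*}

/-- The probability simplex 𝒫(𝒳) on a finite set, as probability mass functions. -/
def simplex (𝒳 : Type*) [Fintype 𝒳] : Set (𝒳 → ℝ) :=
  {p | (∀ x, 0 ≤ p x) ∧ ∑ x, p x = 1}

/-- The set ℬ₁(𝒳) of (sub-probability) measures with total mass at most 1,
as mass functions. -/
def subProb (𝒳 : Type*) [Fintype 𝒳] : Set (𝒳 → ℝ) :=
  {p | (∀ x, 0 ≤ p x) ∧ ∑ x, p x ≤ 1}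

/-- L¹ distance between measures on a finite set. -/
noncomputable def l1dist [Fintype 𝒳] (ν ν' : 𝒳 → ℝ) : ℝ := ∑ x, |ν x - ν' x|

/-- Markovian feedback policies π ∈ Π = 𝒫(𝒰)^{𝒯×𝒳}. -/
def IsPolicy [Fintype 𝒰] (π : ℕ → 𝒳 → 𝒰 → ℝ) : Prop :=
  ∀ t x, (∀ u, 0 ≤ π t x u) ∧ ∑ u, π t x u = 1

/-- P : 𝒳×𝒰×ℬ₁(𝒳) → 𝒫(𝒳) is a transition kernel. -/
def IsKernel [Fintype 𝒳] [Fintype 𝒰] (P : 𝒳 → 𝒰 → (𝒳 → ℝ) → 𝒳 → ℝ) : Prop :=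
  ∀ x u ν, ν ∈ subProb 𝒳 → P x u ν ∈ simplex 𝒳

/-- Lipschitz continuity of the transition kernel w.r.t. the L¹ norm. -/
def KernelLipschitz [Fintype 𝒳] [Fintype 𝒰] (P : 𝒳 → 𝒰 → (𝒳 → ℝ) → 𝒳 → ℝ) (L : ℝ) : Prop :=
  ∀ x u ν ν', ν ∈ subProb 𝒳 → ν' ∈ subProb 𝒳 → l1dist (P x u ν) (P x u ν') ≤ L * l1dist ν ν'

/-- Lipschitz continuity of the reward w.r.t. the L¹ norm. -/
def RewardLipschitz [Fintype 𝒳] [Fintype 𝒰] (r : 𝒳 → 𝒰 → (𝒳 → ℝ) → ℝ) (L : ℝ) : Prop :=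
  ∀ x u ν ν', ν ∈ subProb 𝒳 → ν' ∈ subProb 𝒳 → |r x u ν - r x u ν'| ≤ L * l1dist ν ν'

/-- A graphon: symmetric, measurable, [0,1]-valued. -/
def IsGraphon (W : ℝ → ℝ → ℝ) : Prop :=
  Measurable (Function.uncurry W) ∧ (∀ a b, W a b = W b a) ∧ ∀ a b, W a b ∈ Set.Icc (0:ℝ) 1

/-- Lipschitz continuity of a graphon on [0,1]². -/
def GraphonLipschitz (W : ℝ → ℝ → ℝ) (L : ℝ) : Prop :=
  ∀ a b a' b' : ℝ, a ∈ Set.Icc (0:ℝ) 1 → b ∈ Set.Icc (0:ℝ) 1 → a' ∈ Set.Icc (0:ℝ) 1 →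
    b' ∈ Set.Icc (0:ℝ) 1 → |W a b - W a' b'| ≤ L * (|a - a'| + |b - b'|)

/-- The neighborhood mean field 𝔾^α = ∫₀¹ W(α,β) ν^β dβ of a state marginal ensemble ν. -/
noncomputable def nbhd [Fintype 𝒳] (W : ℝ → ℝ → ℝ) (ν : ℝ → 𝒳 → ℝ) (α : ℝ) : 𝒳 → ℝ :=
  fun x => ∫ β in Set.Ioc (0:ℝ) 1, W α β * ν β x

/-- 𝛍 = Ψ(𝛑): the (measurable) mean field ensemble generated by the policy ensemble 𝛑,
via μ^α_0 = μ₀ and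
μ^α_{t+1}(x') = Σ_{x,u} μ^α_t(x) π^α_t(u|x) P(x'|x,u,𝔾^α_t). -/
def IsMeanFieldOf [Fintype 𝒳] [Fintype 𝒰] (W : ℝ → ℝ → ℝ) (P : 𝒳 → 𝒰 → (𝒳 → ℝ) → 𝒳 → ℝ)
    (μ0 : 𝒳 → ℝ) (πe : ℝ → ℕ → 𝒳 → 𝒰 → ℝ) (μ : ℕ → ℝ → 𝒳 → ℝ) : Prop :=
  (∀ t x, Measurable fun α => μ t α x) ∧
  (∀ α ∈ Set.Icc (0:ℝ) 1, μ 0 α = μ0) ∧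
  ∀ t : ℕ, ∀ α ∈ Set.Icc (0:ℝ) 1, ∀ x' : 𝒳,
    μ (t+1) α x' = ∑ x, μ t α x * ∑ u, πe α t x u * P x u (nbhd W (μ t) α) x'

/-- The law of the state of a single mean field agent with neighborhood mean field
G and policy π: X_0 ∼ μ₀, U_t ∼ π_t(·|X_t), X_{t+1} ∼ P(·|X_t,U_t,G_t). -/
noncomputable def stateLaw [Fintype 𝒳] [Fintype 𝒰] (P : 𝒳 → 𝒰 → (𝒳 → ℝ) → 𝒳 → ℝ)
    (μ0 : 𝒳 → ℝ) (G : ℕ → 𝒳 → ℝ) (π : ℕ → 𝒳 → 𝒰 → ℝ) : ℕ → 𝒳 → ℝ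
  | 0 => μ0
  | (t+1) => fun x' => ∑ x, stateLaw P μ0 G π t x * ∑ u, π t x u * P x u (G t) x'

/-- Mean field objective J(π) = E[Σ_{t<T} r(X_t,U_t,G_t)] of a single agent whose
neighborhood mean field is G. -/
noncomputable def Jmf [Fintype 𝒳] [Fintype 𝒰] (T : ℕ) (r : 𝒳 → 𝒰 → (𝒳 → ℝ) → ℝ)
    (P : 𝒳 → 𝒰 → (𝒳 → ℝ) → 𝒳 → ℝ) (μ0 : 𝒳 → ℝ) (G : ℕ → 𝒳 → ℝ) (π : ℕ → 𝒳 → 𝒰 → ℝ) : ℝ :=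
  ∑ t ∈ Finset.range T, ∑ x, stateLaw P μ0 G π t x * ∑ u, π t x u * r x u (G t)

/-- A Graphon Mean Field Equilibrium: a measurable policy ensemble 𝛑 and mean field
ensemble 𝛍 with 𝛍 = Ψ(𝛑) and π^α optimal for J^𝛍_α for every α ∈ [0,1]. -/
def IsGMFE [Fintype 𝒳] [Fintype 𝒰] (T : ℕ) (W : ℝ → ℝ → ℝ) (P : 𝒳 → 𝒰 → (𝒳 → ℝ) → 𝒳 → ℝ)
    (r : 𝒳 → 𝒰 → (𝒳 → ℝ) → ℝ) (μ0 : 𝒳 → ℝ)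
    (πe : ℝ → ℕ → 𝒳 → 𝒰 → ℝ) (μ : ℕ → ℝ → 𝒳 → ℝ) : Prop :=
  (∀ t x u, Measurable fun α => πe α t x u) ∧
  (∀ α ∈ Set.Icc (0:ℝ) 1, IsPolicy (πe α)) ∧
  IsMeanFieldOf W P μ0 πe μ ∧
  ∀ α ∈ Set.Icc (0:ℝ) 1, ∀ π' : ℕ → 𝒳 → 𝒰 → ℝ, IsPolicy π' →
    Jmf T r P μ0 (fun t => nbhd W (μ t) α) π' ≤ Jmf T r P μ0 (fun t => nbhd W (μ t) α) (πe α)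

/-- α ↦ π^α is Lipschitz continuous up to a finite set D of discontinuities. -/
def EnsembleLipschitzUpTo [Fintype 𝒳] [Fintype 𝒰] (πe : ℝ → ℕ → 𝒳 → 𝒰 → ℝ) : Prop :=
  ∃ (L : ℝ) (D : Finset ℝ), ∀ (t : ℕ) (x : 𝒳) (u : 𝒰),
    ∀ α ∈ Set.Icc (0:ℝ) 1, ∀ β ∈ Set.Icc (0:ℝ) 1,
      (∀ d ∈ D, d ∉ Set.uIcc α β) → |πe α t x u - πe β t x u| ≤ L * |α - β|

/-- Edge indicators of a simple (undirected) graph. -/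
def IsEdgeWeights {N : ℕ} (ξ : Fin N → Fin N → ℝ) : Prop :=
  (∀ i j, ξ i j = 0 ∨ ξ i j = 1) ∧ ∀ i j, ξ i j = ξ j i

/-- Empirical neighborhood mean field 𝔾ⁱ = (1/N) Σ_j ξ_{ij} δ_{X^j}. -/
noncomputable def empNbhd [Fintype 𝒳] [DecidableEq 𝒳] {N : ℕ} (ξ : Fin N → Fin N → ℝ)
    (X : Fin N → 𝒳) (i : Fin N) : 𝒳 → ℝ :=
  fun x => (N : ℝ)⁻¹ * ∑ j, ξ i j * (if X j = x then 1 else 0)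

/-- The joint law of the N agents' states at time t: X^i_0 ∼ μ₀ i.i.d.,
U^i_t ∼ π^i_t(·|X^i_t), X^i_{t+1} ∼ P(·|X^i_t,U^i_t,𝔾^i_t) conditionally independently. -/
noncomputable def jointLaw [Fintype 𝒳] [DecidableEq 𝒳] [Fintype 𝒰] {N : ℕ}
    (P : 𝒳 → 𝒰 → (𝒳 → ℝ) → 𝒳 → ℝ) (μ0 : 𝒳 → ℝ) (ξ : Fin N → Fin N → ℝ)
    (πs : Fin N → ℕ → 𝒳 → 𝒰 → ℝ) : ℕ → (Fin N → 𝒳) → ℝ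
  | 0 => fun X => ∏ i, μ0 (X i)
  | (t+1) => fun Y => ∑ X : Fin N → 𝒳, jointLaw P μ0 ξ πs t X *
      ∏ i, ∑ u, πs i t (X i) u * P (X i) u (empNbhd ξ X i) (Y i)

/-- The objective J^N_i = E[Σ_{t<T} r(X^i_t,U^i_t,𝔾^i_t)] of agent i in the N-agent game. -/
noncomputable def JN [Fintype 𝒳] [DecidableEq 𝒳] [Fintype 𝒰] {N : ℕ} (T : ℕ)
    (r : 𝒳 → 𝒰 → (𝒳 → ℝ) → ℝ) (P : 𝒳 → 𝒰 → (𝒳 → ℝ) → 𝒳 → ℝ) (μ0 : 𝒳 → ℝ)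
    (ξ : Fin N → Fin N → ℝ) (πs : Fin N → ℕ → 𝒳 → 𝒰 → ℝ) (i : Fin N) : ℝ :=
  ∑ t ∈ Finset.range T, ∑ X : Fin N → 𝒳, jointLaw P μ0 ξ πs t X *
    ∑ u, πs i t (X i) u * r (X i) u (empNbhd ξ X i)

/-- Γ_N(𝛑) = (π^{1/N},…,π^{N/N}) (agent i : Fin N has graphon index (i+1)/N). -/
noncomputable def gammaN (πe : ℝ → ℕ → 𝒳 → 𝒰 → ℝ) (N : ℕ) : Fin N → ℕ → 𝒳 → 𝒰 → ℝ :=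
  fun i => πe ((((i : ℕ) : ℝ) + 1) / N)

/-- The step graphon W_N of a finite graph: W_N(x,y) = ξ_{⌈Nx⌉,⌈Ny⌉}. -/
noncomputable def stepGraphon {N : ℕ} (ξ : Fin N → Fin N → ℝ) : ℝ → ℝ → ℝ := fun a b =>
  ∑ i : Fin N, ∑ j : Fin N,
    (if ((i : ℕ) : ℝ) / N < a ∧ a ≤ (((i : ℕ) : ℝ) + 1) / N then 1 else 0) *
    (if ((j : ℕ) : ℝ) / N < b ∧ b ≤ (((j : ℕ) : ℝ) + 1) / N then 1 else 0) * ξ i j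

/-- Assumption (W): ‖W_N − W‖_{L∞→L1} → 0, i.e.
sup_{‖g‖∞ ≤ 1} ∫₀¹ |∫₀¹ (W_N(α,β) − W(α,β)) g(β) dβ| dα → 0. -/
def OpConvergesTo (WN : (N : ℕ) → ℝ → ℝ → ℝ) (W : ℝ → ℝ → ℝ) : Prop :=
  ∀ ε > (0:ℝ), ∃ N₀ : ℕ, ∀ N ≥ N₀, ∀ g : ℝ → ℝ, Measurable g → (∀ β, |g β| ≤ 1) →
    (∫ α in Set.Ioc (0:ℝ) 1, |∫ β in Set.Ioc (0:ℝ) 1, (WN N α β - W α β) * g β|) ≤ ε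

/-- ‖W_N − W‖_{L∞→L1} = O(1/√N). -/
def OpRateSqrt (WN : (N : ℕ) → ℝ → ℝ → ℝ) (W : ℝ → ℝ → ℝ) : Prop :=
  ∃ C : ℝ, ∀ N : ℕ, 1 ≤ N → ∀ g : ℝ → ℝ, Measurable g → (∀ β, |g β| ≤ 1) →
    (∫ α in Set.Ioc (0:ℝ) 1, |∫ β in Set.Ioc (0:ℝ) 1, (WN N α β - W α β) * g β|) ≤ C / Real.sqrt N

/-- 𝛍^N_t(f) = ∫₀¹ f(X^{⌈Nα⌉}, α) dα, the integral of f against the random empirical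
step measure ensemble. -/
noncomputable def empInt [Fintype 𝒳] {N : ℕ} (f : 𝒳 → ℝ → ℝ) (X : Fin N → 𝒳) : ℝ :=
  ∑ i : Fin N, ∫ α in Set.Ioc (((i : ℕ) : ℝ) / N) ((((i : ℕ) : ℝ) + 1) / N), f (X i) α

/-- 𝛍_t(f) = ∫₀¹ Σ_x f(x,α) μ^α_t(x) dα. -/
noncomputable def mfInt [Fintype 𝒳] (f : 𝒳 → ℝ → ℝ) (ν : ℝ → 𝒳 → ℝ) : ℝ :=
  ∫ α in Set.Ioc (0:ℝ) 1, ∑ x, f x α * ν α x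

/-- The representative α_m = (m+1)/M of the m-th equivalence class Ĩ_m = (m/M,(m+1)/M]. -/
noncomputable def rep (M : ℕ) (m : Fin M) : ℝ := (((m : ℕ) : ℝ) + 1) / M

/-- Discretized neighborhood mean field 𝔾̂^{α_m} = (1/M) Σ_n W(α_m,α_n) ν^{α_n}. -/
noncomputable def approxNbhd [Fintype 𝒳] {M : ℕ} (W : ℝ → ℝ → ℝ) (ν : Fin M → 𝒳 → ℝ)
    (m : Fin M) : 𝒳 → ℝ :=
  fun x => (M : ℝ)⁻¹ * ∑ n, W (rep M m) (rep M n) * ν n x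

/-- The approximate mean field μ̂ = Ψ̂(𝛑) of the M equivalence classes method. -/
noncomputable def approxMF [Fintype 𝒳] [Fintype 𝒰] {M : ℕ} (W : ℝ → ℝ → ℝ)
    (P : 𝒳 → 𝒰 → (𝒳 → ℝ) → 𝒳 → ℝ) (μ0 : 𝒳 → ℝ) (πm : Fin M → ℕ → 𝒳 → 𝒰 → ℝ) :
    ℕ → Fin M → 𝒳 → ℝ
  | 0 => fun _ => μ0
  | (t+1) => fun m x' => ∑ x, approxMF W P μ0 πm t m x *
      ∑ u, πm m t x u * P x u (approxNbhd W (approxMF W P μ0 πm t) m) x'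

/-- A solution (𝛑, 𝛍) of the M equivalence classes method: 𝛑 is determined by policies
π^{α_m} (one per class), each optimal for the generated approximate mean field 𝛍 = Ψ̂(𝛑). -/
def IsEqClassSolution [Fintype 𝒳] [Fintype 𝒰] (T : ℕ) {M : ℕ} (W : ℝ → ℝ → ℝ)
    (P : 𝒳 → 𝒰 → (𝒳 → ℝ) → 𝒳 → ℝ) (r : 𝒳 → 𝒰 → (𝒳 → ℝ) → ℝ) (μ0 : 𝒳 → ℝ)
    (πm : Fin M → ℕ → 𝒳 → 𝒰 → ℝ) : Prop :=
  (∀ m, IsPolicy (πm m)) ∧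
  ∀ m, ∀ π' : ℕ → 𝒳 → 𝒰 → ℝ, IsPolicy π' →
    Jmf T r P μ0 (fun t => approxNbhd W (approxMF W P μ0 πm t) m) π'
      ≤ Jmf T r P μ0 (fun t => approxNbhd W (approxMF W P μ0 πm t) m) (πm m)

/-- The optimal action value function Q with k steps to go from time t,
Q(t,x,u) = r(x,u,G_t) + Σ_{x'} P(x'|x,u,G_t) max_{u'} Q(t+1,x',u'). -/
noncomputable def Qfun [Fintype 𝒳] [Fintype 𝒰] [Nonempty 𝒰] (r : 𝒳 → 𝒰 → (𝒳 → ℝ) → ℝ)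
    (P : 𝒳 → 𝒰 → (𝒳 → ℝ) → 𝒳 → ℝ) (G : ℕ → 𝒳 → ℝ) : ℕ → ℕ → 𝒳 → 𝒰 → ℝ
  | 0 => fun _ _ _ => 0
  | (k+1) => fun t x u => r x u (G t) + ∑ x', P x u (G t) x' *
      Finset.univ.sup' Finset.univ_nonempty (fun u' => Qfun r P G k (t+1) x' u')

/-- The Boltzmann (softmax) policy Φ̂_η(𝛍) of the M equivalence classes method with
horizon T, temperature η and block mean field ν. -/
noncomputable def boltzmann [Fintype 𝒳] [Fintype 𝒰] [Nonempty 𝒰] (T : ℕ) (η : ℝ)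
    (r : 𝒳 → 𝒰 → (𝒳 → ℝ) → ℝ) (P : 𝒳 → 𝒰 → (𝒳 → ℝ) → 𝒳 → ℝ) (W : ℝ → ℝ → ℝ) {M : ℕ}
    (ν : ℕ → Fin M → 𝒳 → ℝ) : Fin M → ℕ → 𝒳 → 𝒰 → ℝ :=
  fun m t x u =>
    Real.exp (Qfun r P (fun s => approxNbhd W (ν s) m) (T - t) t x u / η) /
      ∑ u' : 𝒰, Real.exp (Qfun r P (fun s => approxNbhd W (ν s) m) (T - t) t x u' / η)

/-- One step 𝛍 ↦ Ψ̂(Φ̂_η(𝛍)) of the Boltzmann fixed point iteration. -/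
noncomputable def boltzIter [Fintype 𝒳] [Fintype 𝒰] [Nonempty 𝒰] (T : ℕ) (η : ℝ)
    (r : 𝒳 → 𝒰 → (𝒳 → ℝ) → ℝ) (P : 𝒳 → 𝒰 → (𝒳 → ℝ) → 𝒳 → ℝ) (W : ℝ → ℝ → ℝ) (μ0 : 𝒳 → ℝ)
    {M : ℕ} (ν : ℕ → Fin M → 𝒳 → ℝ) : ℕ → Fin M → 𝒳 → ℝ :=
  fun t => approxMF W P μ0 (boltzmann T η r P W ν) t

/-!
Given the current states the agents move independently, so after one step `𝛍ᴺ(f)` lies within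
`O(1/√N)` of its conditional mean, by a variance bound valid for any policies. That conditional
mean differs from the mean field's value in three ways. The policies disagree with `𝛑` by
`O(1/N)` in `L¹`, by Lipschitz continuity off the finitely many blocks that contain a
discontinuity or belong to the deviating agent. The neighborhoods disagree by the error of
`W_N - W` and by the error of `𝛍ᴺ` against the test functions `β ↦ W(α,β) 1_x`. Finally `𝛍ᴺ` and
`𝛍` disagree one step earlier, as measured by `f` pulled back along the mean field transition.
The last two errors are of the same kind as the one to be bounded, which closes an induction on
time as soon as the bound is uniform over all test functions with a given supremum bound.
-/

section Simplex

variable {ι : Type*} [Fintype ι] [Fintype 𝒳]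

lemma simplex_subset_subProb : simplex 𝒳 ⊆ subProb 𝒳 := fun _ hp => ⟨hp.1, hp.2.le⟩

lemma le_one_of_mem_subProb {p : 𝒳 → ℝ} (hp : p ∈ subProb 𝒳) (x : 𝒳) : p x ≤ 1 :=
  (Finset.single_le_sum (fun y _ => hp.1 y) (Finset.mem_univ x)).trans hp.2

lemma mixture_mem_simplex {p : ι → ℝ} {Q : ι → 𝒳 → ℝ} (hp : p ∈ simplex ι)
    (hQ : ∀ i, Q i ∈ simplex 𝒳) : (fun x => ∑ i, p i * Q i x) ∈ simplex 𝒳 := by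
  refine ⟨fun x => Finset.sum_nonneg fun i _ => mul_nonneg (hp.1 i) ((hQ i).1 x), ?_⟩
  rw [Finset.sum_comm]
  simp only [← Finset.mul_sum, (hQ _).2, mul_one, hp.2]

lemma sum_mul_le_of_mem_simplex {p z : 𝒳 → ℝ} {c : ℝ} (hp : p ∈ simplex 𝒳)
    (hz : ∀ x, z x ≤ c) : ∑ x, p x * z x ≤ c :=
  calc ∑ x, p x * z x ≤ ∑ x, p x * c :=
        Finset.sum_le_sum fun x _ => mul_le_mul_of_nonneg_left (hz x) (hp.1 x)
    _ = c := by rw [← Finset.sum_mul, hp.2, one_mul]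

lemma abs_sum_mul_le_sum_mul_abs {p : 𝒳 → ℝ} (hp : p ∈ simplex 𝒳) (z : 𝒳 → ℝ) :
    |∑ x, p x * z x| ≤ ∑ x, p x * |z x| := by
  refine (Finset.abs_sum_le_sum_abs _ _).trans_eq (Finset.sum_congr rfl fun x _ => ?_)
  rw [abs_mul, abs_of_nonneg (hp.1 x)]

lemma sq_sum_mul_abs_le {p : 𝒳 → ℝ} (hp : p ∈ simplex 𝒳) (z : 𝒳 → ℝ) :
    (∑ x, p x * |z x|) ^ 2 ≤ ∑ x, p x * z x ^ 2 := by
  simpa only [sq_abs] using Real.pow_arith_mean_le_arith_mean_pow_of_even Finset.univ p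
    (fun x => |z x|) (fun x _ => hp.1 x) hp.2 even_two

end Simplex

section ProductLaw

variable {ι : Type*} [Fintype ι] [Fintype 𝒳] {q : ι → 𝒳 → ℝ}

lemma prod_mem_simplex [DecidableEq ι] (hq : ∀ i, q i ∈ simplex 𝒳) :
    (fun Y : ι → 𝒳 => ∏ k, q k (Y k)) ∈ simplex (ι → 𝒳) := by
  refine ⟨fun Y => Finset.prod_nonneg fun k _ => (hq k).1 _, ?_⟩
  rw [← Fintype.prod_sum, Finset.prod_eq_one fun k _ => (hq k).2]

lemma sum_prod_mul_apply [DecidableEq ι] (hq : ∀ i, q i ∈ simplex 𝒳) (i : ι) (g : 𝒳 → ℝ) :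
    ∑ Y : ι → 𝒳, (∏ k, q k (Y k)) * g (Y i) = ∑ x, q i x * g x := by
  have hfactor (Y : ι → 𝒳) : (∏ k, q k (Y k)) * g (Y i) =
      ∏ k, q k (Y k) * (if k = i then g (Y k) else 1) := by
    rw [Finset.prod_mul_distrib, Fintype.prod_ite_eq']
  simp only [hfactor]
  rw [← Fintype.prod_sum fun k x => q k x * (if k = i then g x else 1),
    Fintype.prod_eq_single i fun k hk => by simp [hk, (hq k).2]]
  simp only [if_true]

lemma sum_prod_mul_mul_eq_zero [DecidableEq ι] {i j : ι} (hij : i ≠ j) {g : 𝒳 → ℝ}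
    (hg : ∑ x, q i x * g x = 0) (h : 𝒳 → ℝ) :
    ∑ Y : ι → 𝒳, (∏ k, q k (Y k)) * (g (Y i) * h (Y j)) = 0 := by
  have hfactor (Y : ι → 𝒳) : (∏ k, q k (Y k)) * (g (Y i) * h (Y j)) =
      ∏ k, q k (Y k) * ((if k = i then g (Y k) else 1) * (if k = j then h (Y k) else 1)) := by
    simp only [Finset.prod_mul_distrib, Fintype.prod_ite_eq']
  simp only [hfactor]
  rw [← Fintype.prod_sum fun k x =>
    q k x * ((if k = i then g x else 1) * (if k = j then h x else 1))]
  exact Finset.prod_eq_zero (Finset.mem_univ i) (by simpa [hij] using hg)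

lemma sum_prod_mul_sq_sum [DecidableEq ι] (hq : ∀ i, q i ∈ simplex 𝒳) {w : ι → 𝒳 → ℝ}
    (hw : ∀ i, ∑ x, q i x * w i x = 0) :
    ∑ Y : ι → 𝒳, (∏ k, q k (Y k)) * (∑ i, w i (Y i)) ^ 2 = ∑ i, ∑ x, q i x * w i x ^ 2 := by
  simp only [sq, Finset.sum_mul_sum]
  simp only [Finset.mul_sum]
  rw [Finset.sum_comm]
  refine Finset.sum_congr rfl fun i _ => ?_
  rw [Finset.sum_comm, Fintype.sum_eq_single i
    fun j hji => sum_prod_mul_mul_eq_zero hji.symm (hw i) (w j)]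
  exact sum_prod_mul_apply hq i fun x => w i x * w i x

lemma sum_mul_sq_sub_mean_le {p z : 𝒳 → ℝ} {c : ℝ} (hp : p ∈ simplex 𝒳)
    (hz : ∀ x, |z x| ≤ c) : ∑ x, p x * (z x - ∑ y, p y * z y) ^ 2 ≤ c ^ 2 := by
  set m := ∑ y, p y * z y with hm
  have hexpand : ∑ x, p x * (z x - m) ^ 2 = ∑ x, p x * z x ^ 2 - m ^ 2 := by
    have (x : 𝒳) : p x * (z x - m) ^ 2 = p x * z x ^ 2 - 2 * m * (p x * z x) + m ^ 2 * p x := by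
      ring
    simp only [this, Finset.sum_add_distrib, Finset.sum_sub_distrib, ← Finset.mul_sum, hp.2, ← hm]
    ring
  have hsq (x : 𝒳) : z x ^ 2 ≤ c ^ 2 := sq_le_sq.2 ((hz x).trans (le_abs_self c))
  linarith [sum_mul_le_of_mem_simplex hp hsq, sq_nonneg m]

lemma sum_prod_mul_abs_sub_mean_le [DecidableEq ι] (hq : ∀ i, q i ∈ simplex 𝒳)
    {z : ι → 𝒳 → ℝ} {c : ℝ} (hc : 0 ≤ c) (hz : ∀ i x, |z i x| ≤ c) :
    ∑ Y : ι → 𝒳, (∏ k, q k (Y k)) * |∑ i, z i (Y i) - ∑ i, ∑ x, q i x * z i x| ≤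
      √(Fintype.card ι) * c := by
  set w : ι → 𝒳 → ℝ := fun i x => z i x - ∑ y, q i y * z i y with hw
  have hcentred (i : ι) : ∑ x, q i x * w i x = 0 := by
    simp only [hw, mul_sub, Finset.sum_sub_distrib, ← Finset.sum_mul, (hq i).2, one_mul, sub_self]
  have hcentring (Y : ι → 𝒳) :
      ∑ i, z i (Y i) - ∑ i, ∑ x, q i x * z i x = ∑ i, w i (Y i) := by
    rw [← Finset.sum_sub_distrib]
  simp only [hcentring]
  rw [← Real.sqrt_sq hc, ← Real.sqrt_mul (Nat.cast_nonneg _)]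
  refine Real.le_sqrt_of_sq_le ?_
  calc (∑ Y : ι → 𝒳, (∏ k, q k (Y k)) * |∑ i, w i (Y i)|) ^ 2
      ≤ ∑ Y : ι → 𝒳, (∏ k, q k (Y k)) * (∑ i, w i (Y i)) ^ 2 :=
        sq_sum_mul_abs_le (prod_mem_simplex hq) fun Y => ∑ i, w i (Y i)
    _ = ∑ i, ∑ x, q i x * w i x ^ 2 := sum_prod_mul_sq_sum hq hcentred
    _ ≤ ∑ _i : ι, c ^ 2 := Finset.sum_le_sum fun i _ => sum_mul_sq_sub_mean_le (hq i) (hz i)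
    _ = Fintype.card ι * c ^ 2 := by simp

end ProductLaw

section Blocks

variable {N : ℕ}

/-- The `i`-th interval `(i/N, (i+1)/N]` of the equipartition of `(0, 1]`: the set of graphon
indices represented by agent `i`. -/
def block (N : ℕ) (i : Fin N) : Set ℝ := Set.Ioc (((i : ℕ) : ℝ) / N) ((((i : ℕ) : ℝ) + 1) / N)

/-- The agent `⌈Nα⌉` representing the graphon index `α ∈ (0, 1]`, counted from zero. Other values
of `α` are wrapped around, so that the map is total. -/
noncomputable def blockIndex (N : ℕ) [NeZero N] (α : ℝ) : Fin N := Fin.ofNat N (⌈N * α⌉₊ - 1)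

lemma measurableSet_block (i : Fin N) : MeasurableSet (block N i) := measurableSet_Ioc

lemma block_subset_Ioc (i : Fin N) : block N i ⊆ Set.Ioc 0 1 := by
  have hN : (0 : ℝ) < N := by exact_mod_cast i.pos
  have hi : ((i : ℕ) : ℝ) + 1 ≤ N := by exact_mod_cast i.isLt
  exact Set.Ioc_subset_Ioc (by positivity) ((div_le_one hN).2 hi)

lemma right_mem_block (i : Fin N) : (((i : ℕ) : ℝ) + 1) / N ∈ block N i := by
  have hN : (0 : ℝ) < N := by exact_mod_cast i.pos
  exact ⟨by gcongr; linarith, le_rfl⟩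

lemma setIntegral_block_one (i : Fin N) : ∫ _ in block N i, (1 : ℝ) = (N : ℝ)⁻¹ := by
  rw [setIntegral_const, block, Real.volume_real_Ioc_of_le (right_mem_block i).1.le, smul_eq_mul,
    mul_one]
  ring

variable [NeZero N]

lemma mem_block_iff {α : ℝ} {i : Fin N} :
    α ∈ block N i ↔ α ∈ Set.Ioc 0 1 ∧ blockIndex N α = i := by
  rw [← Set.inter_eq_right.2 (block_subset_Ioc i), Set.mem_inter_iff]
  refine and_congr_right fun hα => ?_
  have hN : (0 : ℝ) < N := by exact_mod_cast NeZero.pos N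
  have hceil_pos : 0 < ⌈N * α⌉₊ := Nat.ceil_pos.2 (mul_pos hN hα.1)
  have hceil_le : ⌈N * α⌉₊ ≤ N := Nat.ceil_le.2 (mul_le_of_le_one_right hN.le hα.2)
  have hval : (blockIndex N α : ℕ) = ⌈N * α⌉₊ - 1 := Nat.mod_eq_of_lt (by lia)
  calc α ∈ block N i ↔ ((i : ℕ) : ℝ) < N * α ∧ N * α ≤ ((i : ℕ) : ℝ) + 1 := by
        rw [block, Set.mem_Ioc, div_lt_iff₀' hN, le_div_iff₀' hN]
    _ ↔ ⌈N * α⌉₊ = i + 1 := by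
        rw [Nat.ceil_eq_iff (Nat.succ_ne_zero _)]
        simp
    _ ↔ blockIndex N α = i := by
        rw [Fin.ext_iff, hval]
        lia

lemma blockIndex_eq_of_mem {α : ℝ} {i : Fin N} (hα : α ∈ block N i) : blockIndex N α = i :=
  (mem_block_iff.1 hα).2

lemma iUnion_block : ⋃ i, block N i = Set.Ioc 0 1 :=
  Set.Subset.antisymm (Set.iUnion_subset block_subset_Ioc)
    fun _ hα => Set.mem_iUnion.2 ⟨_, mem_block_iff.2 ⟨hα, rfl⟩⟩

lemma pairwise_disjoint_block : Pairwise (Function.onFun Disjoint (block N)) :=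
  fun _ _ hij => Set.disjoint_left.2 fun _ hi hj =>
    hij (blockIndex_eq_of_mem hi ▸ blockIndex_eq_of_mem hj)

lemma measurable_blockIndex : Measurable (blockIndex N) :=
  (measurable_from_top (f := fun k => Fin.ofNat N (k - 1))).comp
    (Nat.measurable_ceil.comp (measurable_const_mul _))

lemma setIntegral_comp_blockIndex {F : Fin N → ℝ → ℝ} (hF : ∀ i, IntegrableOn (F i) (block N i)) :
    ∫ α in Set.Ioc 0 1, F (blockIndex N α) α = ∑ i, ∫ α in block N i, F i α := by
  have hcongr (i : Fin N) : Set.EqOn (F i) (fun α => F (blockIndex N α) α) (block N i) :=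
    fun α hα => by simp only [blockIndex_eq_of_mem hα]
  rw [← iUnion_block (N := N), integral_iUnion_fintype measurableSet_block pairwise_disjoint_block
    fun i => (hF i).congr_fun (hcongr i) (measurableSet_block i)]
  exact Finset.sum_congr rfl fun i _ =>
    (setIntegral_congr_fun (measurableSet_block i) (hcongr i)).symm

lemma setIntegral_const_comp_blockIndex (c : Fin N → ℝ) :
    ∫ α in Set.Ioc 0 1, c (blockIndex N α) = (N : ℝ)⁻¹ * ∑ i, c i := by
  rw [setIntegral_comp_blockIndex (F := fun i _ => c i)
    fun i => integrableOn_const (by simp [block]), Finset.mul_sum]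
  refine Finset.sum_congr rfl fun i _ => ?_
  rw [← setIntegral_block_one i, ← integral_mul_const]
  simp only [one_mul]

end Blocks

section Ensembles

/-- A measurable family of probability vectors indexed by `(0, 1]`: the class of state marginal
ensembles. -/
structure IsEnsemble [Fintype 𝒳] (ν : ℝ → 𝒳 → ℝ) : Prop where
  measurable : ∀ x, Measurable fun α => ν α x
  mem_simplex : ∀ α ∈ Set.Ioc (0 : ℝ) 1, ν α ∈ simplex 𝒳

/-- A measurable family of sub-probability vectors: the class of neighborhood mean fields. -/
structure IsSubEnsemble [Fintype 𝒳] (G : ℝ → 𝒳 → ℝ) : Prop where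
  measurable : ∀ x, Measurable fun α => G α x
  mem_subProb : ∀ α, G α ∈ subProb 𝒳

/-- A measurable function on `𝒳 × (0, 1]` bounded by `M`, against which ensembles are tested. -/
structure IsTestFunction (M : ℝ) (f : 𝒳 → ℝ → ℝ) : Prop where
  measurable : ∀ x, Measurable (f x)
  abs_le : ∀ x, ∀ α ∈ Set.Ioc (0 : ℝ) 1, |f x α| ≤ M

lemma integrableOn_Ioc_of_abs_le {h : ℝ → ℝ} (hm : Measurable h) {C : ℝ}
    (hC : ∀ α ∈ Set.Ioc (0 : ℝ) 1, |h α| ≤ C) : IntegrableOn h (Set.Ioc 0 1) :=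
  Measure.integrableOn_of_bounded (by simp) hm.aestronglyMeasurable
    ((ae_restrict_iff' measurableSet_Ioc).2 (Eventually.of_forall hC))

lemma setIntegral_Ioc_le_of_le {h : ℝ → ℝ} (hh : IntegrableOn h (Set.Ioc 0 1)) {C : ℝ}
    (hC : ∀ α ∈ Set.Ioc (0 : ℝ) 1, h α ≤ C) : ∫ α in Set.Ioc 0 1, h α ≤ C := by
  simpa using setIntegral_mono_on hh (integrableOn_const (by simp)) measurableSet_Ioc hC

lemma IsTestFunction.nonneg [Nonempty 𝒳] {M : ℝ} {f : 𝒳 → ℝ → ℝ} (hf : IsTestFunction M f) :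
    0 ≤ M :=
  (abs_nonneg _).trans (hf.abs_le (Classical.arbitrary 𝒳) 1 (by simp))

variable [Fintype 𝒳] {M : ℝ} {f : 𝒳 → ℝ → ℝ} {ν ν' G G' : ℝ → 𝒳 → ℝ}

lemma mfInt_congr (f : 𝒳 → ℝ → ℝ) (h : ∀ α ∈ Set.Ioc (0 : ℝ) 1, ν α = ν' α) :
    mfInt f ν = mfInt f ν' :=
  setIntegral_congr_fun measurableSet_Ioc fun α hα => by simp only [h α hα]

lemma IsTestFunction.abs_sum_mul_le (hf : IsTestFunction M f) {p : 𝒳 → ℝ} (hp : p ∈ simplex 𝒳)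
    {α : ℝ} (hα : α ∈ Set.Ioc 0 1) : |∑ x, f x α * p x| ≤ M := by
  simp only [mul_comm (f _ α)]
  exact (abs_sum_mul_le_sum_mul_abs hp _).trans
    (sum_mul_le_of_mem_simplex hp fun x => hf.abs_le x α hα)

lemma IsTestFunction.integrableOn_sum_mul (hf : IsTestFunction M f) (hν : IsEnsemble ν) :
    IntegrableOn (fun α => ∑ x, f x α * ν α x) (Set.Ioc 0 1) :=
  integrableOn_Ioc_of_abs_le
    (Finset.measurable_sum _ fun x _ => (hf.measurable x).mul (hν.measurable x))
    fun α hα => hf.abs_sum_mul_le (hν.mem_simplex α hα) hα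

lemma abs_sub_le_one_of_mem_subProb {p q : 𝒳 → ℝ} (hp : p ∈ subProb 𝒳) (hq : q ∈ subProb 𝒳)
    (x : 𝒳) : |p x - q x| ≤ 1 :=
  abs_sub_le_of_nonneg_of_le (hp.1 x) (le_one_of_mem_subProb hp x) (hq.1 x)
    (le_one_of_mem_subProb hq x)

lemma IsSubEnsemble.integrableOn_abs_sub (hG : IsSubEnsemble G) (hG' : IsSubEnsemble G') (x : 𝒳) :
    IntegrableOn (fun α => |G α x - G' α x|) (Set.Ioc 0 1) :=
  integrableOn_Ioc_of_abs_le ((hG.measurable x).sub (hG'.measurable x)).abs fun α _ =>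
    (abs_abs _).trans_le (abs_sub_le_one_of_mem_subProb (hG.mem_subProb α) (hG'.mem_subProb α) x)

lemma IsSubEnsemble.integrableOn_l1dist (hG : IsSubEnsemble G) (hG' : IsSubEnsemble G') :
    IntegrableOn (fun α => l1dist (G α) (G' α)) (Set.Ioc 0 1) :=
  integrable_finsetSum _ fun x _ => hG.integrableOn_abs_sub hG' x

lemma IsEnsemble.integrableOn_abs_sub (hν : IsEnsemble ν) (hν' : IsEnsemble ν') (x : 𝒳) :
    IntegrableOn (fun α => |ν α x - ν' α x|) (Set.Ioc 0 1) :=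
  integrableOn_Ioc_of_abs_le ((hν.measurable x).sub (hν'.measurable x)).abs fun α hα =>
    (abs_abs _).trans_le (abs_sub_le_one_of_mem_subProb
      (simplex_subset_subProb (hν.mem_simplex α hα))
      (simplex_subset_subProb (hν'.mem_simplex α hα)) x)

lemma IsEnsemble.integrableOn_l1dist (hν : IsEnsemble ν) (hν' : IsEnsemble ν') :
    IntegrableOn (fun α => l1dist (ν α) (ν' α)) (Set.Ioc 0 1) :=
  integrable_finsetSum _ fun x _ => hν.integrableOn_abs_sub hν' x

end Ensembles

section Neighborhood

/-- A measurable `[0, 1]`-valued kernel on indices, that is, a graphon without the symmetry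
requirement. -/
structure IsDigraphon (W : ℝ → ℝ → ℝ) : Prop where
  measurable : Measurable (Function.uncurry W)
  mem_Icc : ∀ a b, W a b ∈ Set.Icc (0 : ℝ) 1

/-- The bound `‖V‖_{L∞→L1} ≤ ε` for the integral operator with kernel `V` on `(0, 1]`. -/
def OpNormLE (V : ℝ → ℝ → ℝ) (ε : ℝ) : Prop :=
  ∀ g : ℝ → ℝ, Measurable g → (∀ β, |g β| ≤ 1) →
    (∫ α in Set.Ioc (0 : ℝ) 1, |∫ β in Set.Ioc (0 : ℝ) 1, V α β * g β|) ≤ ε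

/-- The test function `f` with `mfInt f ν = nbhd W ν α x` for every `ν`. -/
noncomputable def neighborTest [DecidableEq 𝒳] (W : ℝ → ℝ → ℝ) (α : ℝ) (x : 𝒳) : 𝒳 → ℝ → ℝ :=
  fun y β => if y = x then W α β else 0

variable {W W' : ℝ → ℝ → ℝ} {ε : ℝ}

lemma OpNormLE.mono {ε' : ℝ} (hW : OpNormLE W ε) (h : ε ≤ ε') : OpNormLE W ε' :=
  fun g hgm hg => (hW g hgm hg).trans h

lemma OpNormLE.nonneg (hW : OpNormLE W ε) : 0 ≤ ε := by
  simpa using hW 0 measurable_zero fun _ => by simp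

lemma OpNormLE.integral_abs_le (hW : OpNormLE W ε) {g : ℝ → ℝ} (hgm : Measurable g)
    (hg : ∀ β ∈ Set.Ioc (0 : ℝ) 1, |g β| ≤ 1) :
    (∫ α in Set.Ioc (0 : ℝ) 1, |∫ β in Set.Ioc (0 : ℝ) 1, W α β * g β|) ≤ ε := by
  have hle (β : ℝ) : |(Set.Ioc 0 1).indicator g β| ≤ 1 := by
    by_cases hβ : β ∈ Set.Ioc (0 : ℝ) 1
    · simpa only [Set.indicator_of_mem hβ] using hg β hβ
    · simp [Set.indicator_of_notMem hβ]
  refine le_of_eq_of_le ?_ (hW _ (hgm.indicator measurableSet_Ioc) hle)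
  refine integral_congr_ae (.of_forall fun α => congrArg abs ?_)
  exact setIntegral_congr_fun measurableSet_Ioc fun β hβ => by simp only [Set.indicator_of_mem hβ]

lemma IsDigraphon.isTestFunction_neighborTest [DecidableEq 𝒳] (hW : IsDigraphon W) (α : ℝ)
    (x : 𝒳) : IsTestFunction 1 (neighborTest W α x) where
  measurable y := by
    unfold neighborTest
    split_ifs
    · exact hW.measurable.comp (measurable_const.prodMk measurable_id)
    · exact measurable_const
  abs_le y β _ := by
    unfold neighborTest
    split_ifs
    · exact abs_le.2 ⟨by linarith [(hW.mem_Icc α β).1], (hW.mem_Icc α β).2⟩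
    · simp

variable [Fintype 𝒳] {ν ν' : ℝ → 𝒳 → ℝ}

lemma mfInt_neighborTest [DecidableEq 𝒳] (W : ℝ → ℝ → ℝ) (α : ℝ) (x : 𝒳) (ν : ℝ → 𝒳 → ℝ) :
    mfInt (neighborTest W α x) ν = nbhd W ν α x := by
  simp only [mfInt, neighborTest, nbhd, ite_mul, zero_mul, Finset.sum_ite_eq', Finset.mem_univ,
    if_true]

lemma IsDigraphon.integrableOn_mul (hW : IsDigraphon W) (hν : IsEnsemble ν) (α : ℝ) (x : 𝒳) :
    IntegrableOn (fun β => W α β * ν β x) (Set.Ioc 0 1) := by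
  have hWα : Measurable (W α) := hW.measurable.comp (measurable_const.prodMk measurable_id)
  refine integrableOn_Ioc_of_abs_le (C := 1) (hWα.mul (hν.measurable x)) fun β hβ => ?_
  have hνβ := hν.mem_simplex β hβ
  rw [abs_of_nonneg (mul_nonneg (hW.mem_Icc α β).1 (hνβ.1 x))]
  exact mul_le_one₀ (hW.mem_Icc α β).2 (hνβ.1 x)
    (le_one_of_mem_subProb (simplex_subset_subProb hνβ) x)

lemma IsDigraphon.isSubEnsemble_nbhd (hW : IsDigraphon W) (hν : IsEnsemble ν) :
    IsSubEnsemble (nbhd W ν) where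
  measurable x := by
    have hm : Measurable (Function.uncurry fun α β => W α β * ν β x) :=
      hW.measurable.mul ((hν.measurable x).comp measurable_snd)
    exact (hm.stronglyMeasurable.integral_prod_right
      (ν := volume.restrict (Set.Ioc (0 : ℝ) 1))).measurable
  mem_subProb α := by
    refine ⟨fun x => setIntegral_nonneg measurableSet_Ioc fun β hβ =>
      mul_nonneg (hW.mem_Icc α β).1 ((hν.mem_simplex β hβ).1 x), ?_⟩
    simp only [nbhd]
    rw [← integral_finsetSum _ fun x _ => hW.integrableOn_mul hν α x]
    refine setIntegral_Ioc_le_of_le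
      (integrable_finsetSum _ fun x _ => hW.integrableOn_mul hν α x) fun β hβ => ?_
    rw [← Finset.mul_sum, (hν.mem_simplex β hβ).2, mul_one]
    exact (hW.mem_Icc α β).2

lemma integral_abs_nbhd_sub_nbhd_le (hW : IsDigraphon W) (hW' : IsDigraphon W')
    (hε : OpNormLE (fun α β => W' α β - W α β) ε) (hν : IsEnsemble ν) (x : 𝒳) :
    ∫ α in Set.Ioc 0 1, |nbhd W' ν α x - nbhd W ν α x| ≤ ε := by
  have hsub (α : ℝ) : nbhd W' ν α x - nbhd W ν α x =
      ∫ β in Set.Ioc 0 1, (W' α β - W α β) * ν β x := by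
    simp only [nbhd, sub_mul]
    exact (integral_sub (hW'.integrableOn_mul hν α x) (hW.integrableOn_mul hν α x)).symm
  simp only [hsub]
  refine hε.integral_abs_le (hν.measurable x) fun β hβ => ?_
  have hνβ := hν.mem_simplex β hβ
  rw [abs_of_nonneg (hνβ.1 x)]
  exact le_one_of_mem_subProb (simplex_subset_subProb hνβ) x

lemma integral_l1dist_nbhd_le (hW : IsDigraphon W) (hW' : IsDigraphon W')
    (hε : OpNormLE (fun α β => W' α β - W α β) ε) (hν : IsEnsemble ν) (hν' : IsEnsemble ν') :
    ∫ α in Set.Ioc 0 1, l1dist (nbhd W' ν' α) (nbhd W ν α) ≤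
      ∑ x, (ε + ∫ α in Set.Ioc 0 1, |nbhd W ν' α x - nbhd W ν α x|) := by
  have hWν := hW.isSubEnsemble_nbhd hν
  have hWν' := hW.isSubEnsemble_nbhd hν'
  have hW'ν' := hW'.isSubEnsemble_nbhd hν'
  simp only [l1dist]
  rw [integral_finsetSum _ fun x _ => hW'ν'.integrableOn_abs_sub hWν x]
  refine Finset.sum_le_sum fun x _ => ?_
  calc ∫ α in Set.Ioc 0 1, |nbhd W' ν' α x - nbhd W ν α x|
      ≤ ∫ α in Set.Ioc 0 1,
          (|nbhd W' ν' α x - nbhd W ν' α x| + |nbhd W ν' α x - nbhd W ν α x|) :=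
        integral_mono (hW'ν'.integrableOn_abs_sub hWν x)
          ((hW'ν'.integrableOn_abs_sub hWν' x).add (hWν'.integrableOn_abs_sub hWν x))
          fun α => abs_sub_le _ _ _
    _ = (∫ α in Set.Ioc 0 1, |nbhd W' ν' α x - nbhd W ν' α x|) +
          ∫ α in Set.Ioc 0 1, |nbhd W ν' α x - nbhd W ν α x| :=
        integral_add (hW'ν'.integrableOn_abs_sub hWν' x) (hWν'.integrableOn_abs_sub hWν x)
    _ ≤ ε + ∫ α in Set.Ioc 0 1, |nbhd W ν' α x - nbhd W ν α x| := by
        gcongr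
        exact integral_abs_nbhd_sub_nbhd_le hW hW' hε hν' x

end Neighborhood

section Transition

variable [Fintype 𝒰]

/-- The law `∑ᵤ π(u|x) P(·|x,u,ν)` of the next state of an agent in state `x` with decision rule
`π` and neighborhood mean field `ν`. -/
def transition (P : 𝒳 → 𝒰 → (𝒳 → ℝ) → 𝒳 → ℝ) (π : 𝒳 → 𝒰 → ℝ) (ν : 𝒳 → ℝ) (x y : 𝒳) : ℝ :=
  ∑ u, π x u * P x u ν y

/-- The state ensemble one time step after `ν`, when agent `α` uses the decision rule `π α` and
sees the neighborhood mean field `G α`. -/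
def propagate [Fintype 𝒳] (P : 𝒳 → 𝒰 → (𝒳 → ℝ) → 𝒳 → ℝ) (π : ℝ → 𝒳 → 𝒰 → ℝ) (G ν : ℝ → 𝒳 → ℝ)
    (α : ℝ) (y : 𝒳) : ℝ :=
  ∑ x, ν α x * transition P (π α) (G α) x y

/-- The adjoint of `propagate`, acting on test functions. -/
def pull [Fintype 𝒳] (P : 𝒳 → 𝒰 → (𝒳 → ℝ) → 𝒳 → ℝ) (π : ℝ → 𝒳 → 𝒰 → ℝ) (G : ℝ → 𝒳 → ℝ)
    (f : 𝒳 → ℝ → ℝ) (x : 𝒳) (α : ℝ) : ℝ :=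
  ∑ y, f y α * transition P (π α) (G α) x y

variable [Fintype 𝒳] {P : 𝒳 → 𝒰 → (𝒳 → ℝ) → 𝒳 → ℝ} {L M : ℝ} {f : 𝒳 → ℝ → ℝ}
  {π π' : ℝ → 𝒳 → 𝒰 → ℝ} {G G' ν : ℝ → 𝒳 → ℝ}

lemma l1dist_nonneg (p q : 𝒳 → ℝ) : 0 ≤ l1dist p q :=
  Finset.sum_nonneg fun _ _ => abs_nonneg _

lemma transition_mem_simplex (hP : IsKernel P) {a : 𝒳 → 𝒰 → ℝ} {x : 𝒳} (ha : a x ∈ simplex 𝒰)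
    {p : 𝒳 → ℝ} (hp : p ∈ subProb 𝒳) : transition P a p x ∈ simplex 𝒳 :=
  mixture_mem_simplex ha fun u => hP x u p hp

lemma l1dist_transition_le (hP : IsKernel P) (hL : KernelLipschitz P L) (a : 𝒳 → 𝒰 → ℝ)
    {b : 𝒳 → 𝒰 → ℝ} {x : 𝒳} (hb : b x ∈ simplex 𝒰) {p q : 𝒳 → ℝ} (hp : p ∈ subProb 𝒳)
    (hq : q ∈ subProb 𝒳) :
    l1dist (transition P a p x) (transition P b q x) ≤ l1dist (a x) (b x) + L * l1dist p q := by
  have hpoint (y : 𝒳) : |transition P a p x y - transition P b q x y| ≤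
      ∑ u, |a x u - b x u| * P x u p y + ∑ u, b x u * |P x u p y - P x u q y| := by
    have hsplit : transition P a p x y - transition P b q x y =
        ∑ u, (a x u - b x u) * P x u p y + ∑ u, b x u * (P x u p y - P x u q y) := by
      simp only [transition, ← Finset.sum_sub_distrib, ← Finset.sum_add_distrib]
      exact Finset.sum_congr rfl fun u _ => by ring
    rw [hsplit]
    refine (abs_add_le _ _).trans (add_le_add ?_ (abs_sum_mul_le_sum_mul_abs hb _))
    refine (Finset.abs_sum_le_sum_abs _ _).trans_eq (Finset.sum_congr rfl fun u _ => ?_)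
    rw [abs_mul, abs_of_nonneg ((hP x u p hp).1 y)]
  calc l1dist (transition P a p x) (transition P b q x)
      ≤ ∑ y, (∑ u, |a x u - b x u| * P x u p y + ∑ u, b x u * |P x u p y - P x u q y|) :=
        Finset.sum_le_sum fun y _ => hpoint y
    _ = l1dist (a x) (b x) + ∑ u, b x u * l1dist (P x u p) (P x u q) := by
        rw [Finset.sum_add_distrib]
        congr 1 <;> rw [Finset.sum_comm] <;>
          simp only [← Finset.mul_sum, (hP x _ p hp).2, mul_one, l1dist]
    _ ≤ l1dist (a x) (b x) + L * l1dist p q := by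
        gcongr
        exact sum_mul_le_of_mem_simplex hb fun u => hL x u p q hp hq

lemma KernelLipschitz.measurable_comp (hL : KernelLipschitz P L) (hG : IsSubEnsemble G)
    (x : 𝒳) (u : 𝒰) (y : 𝒳) : Measurable fun α => P x u (G α) y := by
  have hcont : Continuous fun p : subProb 𝒳 => P x u p y := by
    refine continuous_iff_continuousAt.2 fun p₀ => tendsto_iff_dist_tendsto_zero.2 ?_
    have hlim : Tendsto (fun p : subProb 𝒳 => L * l1dist (p : 𝒳 → ℝ) p₀) (nhds p₀) (nhds 0) := by
      have : Continuous fun p : subProb 𝒳 => L * l1dist (p : 𝒳 → ℝ) p₀ :=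
        continuous_const.mul (continuous_finsetSum _ fun z _ =>
          (((continuous_apply z).comp continuous_subtype_val).sub continuous_const).abs)
      simpa [l1dist] using this.tendsto p₀
    refine squeeze_zero (fun _ => dist_nonneg) (fun p => ?_) hlim
    calc dist (P x u p y) (P x u p₀ y) ≤ l1dist (P x u p) (P x u p₀) :=
          Finset.single_le_sum (f := fun z => |P x u p z - P x u p₀ z|)
            (fun _ _ => abs_nonneg _) (Finset.mem_univ y)
      _ ≤ L * l1dist (p : 𝒳 → ℝ) p₀ := hL x u p p₀ p.2 p₀.2
  exact hcont.measurable.comp ((measurable_pi_lambda _ hG.measurable).subtype_mk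
    (h := hG.mem_subProb))

lemma measurable_transition (hL : KernelLipschitz P L) (hπ : ∀ x, IsEnsemble fun α => π α x)
    (hG : IsSubEnsemble G) (x y : 𝒳) : Measurable fun α => transition P (π α) (G α) x y :=
  Finset.measurable_sum _ fun u _ => ((hπ x).measurable u).mul (hL.measurable_comp hG x u y)

lemma IsTestFunction.pull (hf : IsTestFunction M f) (hP : IsKernel P) (hL : KernelLipschitz P L)
    (hπ : ∀ x, IsEnsemble fun α => π α x) (hG : IsSubEnsemble G) :
    IsTestFunction M (pull P π G f) where
  measurable x := Finset.measurable_sum _ fun y _ =>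
    (hf.measurable y).mul (measurable_transition hL hπ hG x y)
  abs_le x α hα := hf.abs_sum_mul_le
    (transition_mem_simplex hP ((hπ x).mem_simplex α hα) (hG.mem_subProb α)) hα

lemma mfInt_propagate (P : 𝒳 → 𝒰 → (𝒳 → ℝ) → 𝒳 → ℝ) (π : ℝ → 𝒳 → 𝒰 → ℝ) (G : ℝ → 𝒳 → ℝ)
    (f : 𝒳 → ℝ → ℝ) (ν : ℝ → 𝒳 → ℝ) :
    mfInt f (propagate P π G ν) = mfInt (pull P π G f) ν := by
  refine integral_congr_ae (.of_forall fun α => ?_)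
  simp only [propagate, pull, Finset.mul_sum, Finset.sum_mul]
  rw [Finset.sum_comm]
  exact Finset.sum_congr rfl fun x _ => Finset.sum_congr rfl fun y _ => by ring

lemma abs_pull_sub_pull_le (hf : IsTestFunction M f) (hP : IsKernel P)
    (hL : KernelLipschitz P L) (hπ : ∀ x, IsEnsemble fun α => π α x) (hG : IsSubEnsemble G)
    (hG' : IsSubEnsemble G') {α : ℝ} (hα : α ∈ Set.Ioc 0 1) (x : 𝒳) :
    |pull P π' G' f x α - pull P π G f x α| ≤
      M * (l1dist (π' α x) (π α x) + L * l1dist (G' α) (G α)) := by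
  have : Nonempty 𝒳 := ⟨x⟩
  calc |pull P π' G' f x α - pull P π G f x α|
      ≤ ∑ y, M * |transition P (π' α) (G' α) x y - transition P (π α) (G α) x y| := by
        simp only [pull, ← Finset.sum_sub_distrib, ← mul_sub]
        refine (Finset.abs_sum_le_sum_abs _ _).trans (Finset.sum_le_sum fun y _ => ?_)
        rw [abs_mul]
        exact mul_le_mul_of_nonneg_right (hf.abs_le y α hα) (abs_nonneg _)
    _ = M * l1dist (transition P (π' α) (G' α) x) (transition P (π α) (G α) x) :=
        (Finset.mul_sum _ _ _).symm
    _ ≤ M * (l1dist (π' α x) (π α x) + L * l1dist (G' α) (G α)) :=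
        mul_le_mul_of_nonneg_left (l1dist_transition_le hP hL (π' α) ((hπ x).mem_simplex α hα)
          (hG'.mem_subProb α) (hG.mem_subProb α)) hf.nonneg

lemma abs_mfInt_propagate_sub_le [Nonempty 𝒳] (hf : IsTestFunction M f) (hP : IsKernel P)
    (hL : KernelLipschitz P L) (hπ : ∀ x, IsEnsemble fun α => π α x)
    (hπ' : ∀ x, IsEnsemble fun α => π' α x) (hG : IsSubEnsemble G) (hG' : IsSubEnsemble G')
    (hν : IsEnsemble ν) :
    |mfInt f (propagate P π' G' ν) - mfInt f (propagate P π G ν)| ≤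
      M * ((∫ α in Set.Ioc 0 1, ∑ x, l1dist (π' α x) (π α x)) +
        L * ∫ α in Set.Ioc 0 1, l1dist (G' α) (G α)) := by
  have hpolicy : IntegrableOn (fun α => ∑ x, l1dist (π' α x) (π α x)) (Set.Ioc 0 1) :=
    integrable_finsetSum _ fun x _ => (hπ' x).integrableOn_l1dist (hπ x)
  have hfield := (hG'.integrableOn_l1dist hG).const_mul L
  have hpull := (hf.pull hP hL hπ hG).integrableOn_sum_mul hν
  have hpull' := (hf.pull hP hL hπ' hG').integrableOn_sum_mul hν
  rw [mfInt_propagate, mfInt_propagate, mfInt, mfInt, ← integral_sub hpull' hpull,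
    ← integral_const_mul L, ← integral_add hpolicy hfield, ← integral_const_mul]
  refine (abs_integral_le_integral_abs).trans (setIntegral_mono_on (hpull'.sub hpull).abs
    ((hpolicy.add hfield).const_mul M) measurableSet_Ioc fun α hα => ?_)
  simp only [← Finset.sum_sub_distrib, ← sub_mul]
  simp only [mul_comm _ (ν α _)]
  have hνα := hν.mem_simplex α hα
  refine (abs_sum_mul_le_sum_mul_abs hνα _).trans (sum_mul_le_of_mem_simplex hνα fun x => ?_)
  refine (abs_pull_sub_pull_le hf hP hL hπ hG hG' hα x).trans
    (mul_le_mul_of_nonneg_left ?_ hf.nonneg)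
  gcongr
  exact Finset.single_le_sum (fun y _ => l1dist_nonneg (π' α y) (π α y)) (Finset.mem_univ x)

end Transition

section BlockAverages

variable {N : ℕ} {M : ℝ} {f : 𝒳 → ℝ → ℝ}

lemma IsTestFunction.integrableOn_block (hf : IsTestFunction M f) (x : 𝒳) (i : Fin N) :
    IntegrableOn (f x) (block N i) :=
  (integrableOn_Ioc_of_abs_le (hf.measurable x) (hf.abs_le x)).mono_set (block_subset_Ioc i)

lemma IsTestFunction.abs_setIntegral_block_le (hf : IsTestFunction M f) (x : 𝒳) (i : Fin N) :
    |∫ α in block N i, f x α| ≤ M * (N : ℝ)⁻¹ := by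
  rw [← setIntegral_block_one i, ← integral_const_mul]
  refine abs_integral_le_integral_abs.trans (setIntegral_mono_on (hf.integrableOn_block x i).abs
    (integrableOn_const (by simp [block])) (measurableSet_block i) fun α hα => ?_)
  simpa only [mul_one] using hf.abs_le x α (block_subset_Ioc i hα)

variable [Fintype 𝒳] [NeZero N]

lemma mfInt_comp_blockIndex (hf : IsTestFunction M f) (q : Fin N → 𝒳 → ℝ) :
    mfInt f (fun α => q (blockIndex N α)) = ∑ i, ∑ x, q i x * ∫ α in block N i, f x α := by
  have hint (i : Fin N) (x : 𝒳) : IntegrableOn (fun α => f x α * q i x) (block N i) :=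
    (hf.integrableOn_block x i).mul_const _
  rw [mfInt, setIntegral_comp_blockIndex (F := fun i α => ∑ x, f x α * q i x)
    fun i => integrable_finsetSum _ fun x _ => hint i x]
  refine Finset.sum_congr rfl fun i _ => ?_
  rw [integral_finsetSum _ fun x _ => hint i x]
  simp only [integral_mul_const, mul_comm]

lemma sum_prod_mul_abs_empInt_sub_le [Nonempty 𝒳] (hf : IsTestFunction M f)
    {q : Fin N → 𝒳 → ℝ} (hq : ∀ i, q i ∈ simplex 𝒳) :
    ∑ Y : Fin N → 𝒳, (∏ i, q i (Y i)) *
      |empInt f Y - mfInt f fun α => q (blockIndex N α)| ≤ M / √N := by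
  rw [mfInt_comp_blockIndex hf]
  refine (sum_prod_mul_abs_sub_mean_le hq (mul_nonneg hf.nonneg (by positivity))
    fun i x => hf.abs_setIntegral_block_le x i).trans_eq ?_
  rw [Fintype.card_fin, mul_left_comm, ← div_eq_mul_inv, Real.sqrt_div_self', mul_one_div]

end BlockAverages

section Empirical

variable [Fintype 𝒳] [DecidableEq 𝒳] {N : ℕ} [NeZero N] {ξ : Fin N → Fin N → ℝ} {M ε e : ℝ}
  {f : 𝒳 → ℝ → ℝ} {W : ℝ → ℝ → ℝ} {ν : ℝ → 𝒳 → ℝ}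

lemma stepGraphon_eq_ite (ξ : Fin N → Fin N → ℝ) (α β : ℝ) :
    stepGraphon ξ α β = if α ∈ Set.Ioc 0 1 ∧ β ∈ Set.Ioc 0 1 then
      ξ (blockIndex N α) (blockIndex N β) else 0 := by
  have hblock (γ : ℝ) (i : Fin N) : (((i : ℕ) : ℝ) / N < γ ∧ γ ≤ (((i : ℕ) : ℝ) + 1) / N) ↔
      γ ∈ Set.Ioc 0 1 ∧ blockIndex N γ = i := mem_block_iff
  simp only [stepGraphon, hblock]
  by_cases hα : α ∈ Set.Ioc (0 : ℝ) 1 <;> by_cases hβ : β ∈ Set.Ioc (0 : ℝ) 1 <;> simp [hα, hβ]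

lemma isDigraphon_stepGraphon (hξ : ∀ i j, ξ i j ∈ Set.Icc (0 : ℝ) 1) :
    IsDigraphon (stepGraphon ξ) where
  measurable := by
    have hblock (i : Fin N) : Measurable fun γ : ℝ =>
        if ((i : ℕ) : ℝ) / N < γ ∧ γ ≤ (((i : ℕ) : ℝ) + 1) / N then (1 : ℝ) else 0 :=
      Measurable.ite (measurableSet_block i) measurable_const measurable_const
    unfold stepGraphon Function.uncurry
    exact Finset.measurable_sum _ fun i _ => Finset.measurable_sum _ fun j _ =>
      (((hblock i).comp measurable_fst).mul ((hblock j).comp measurable_snd)).mul_const _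
  mem_Icc α β := by
    rw [stepGraphon_eq_ite]
    split_ifs
    · exact hξ _ _
    · simp

/-- The empirical step measure ensemble `α ↦ δ_{X^{⌈Nα⌉}}`. -/
noncomputable def empEnsemble (X : Fin N → 𝒳) (α : ℝ) (x : 𝒳) : ℝ :=
  if X (blockIndex N α) = x then 1 else 0

lemma isEnsemble_empEnsemble (X : Fin N → 𝒳) : IsEnsemble (empEnsemble X) where
  measurable x :=
    (measurable_of_finite fun i => if X i = x then (1 : ℝ) else 0).comp measurable_blockIndex
  mem_simplex α _ := by
    refine ⟨fun x => ?_, by simp [empEnsemble]⟩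
    unfold empEnsemble
    split_ifs <;> simp

lemma mfInt_empEnsemble (hf : IsTestFunction M f) (X : Fin N → 𝒳) :
    mfInt f (empEnsemble X) = empInt f X := by
  simp only [mfInt, empEnsemble, mul_ite, mul_one, mul_zero, Finset.sum_ite_eq, Finset.mem_univ,
    if_true]
  exact setIntegral_comp_blockIndex (F := fun i => f (X i)) fun i => hf.integrableOn_block _ i

lemma nbhd_stepGraphon_empEnsemble (ξ : Fin N → Fin N → ℝ) (X : Fin N → 𝒳) {α : ℝ}
    (hα : α ∈ Set.Ioc (0 : ℝ) 1) :
    nbhd (stepGraphon ξ) (empEnsemble X) α = empNbhd ξ X (blockIndex N α) := by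
  funext x
  rw [empNbhd, ← setIntegral_const_comp_blockIndex
    fun j => ξ (blockIndex N α) j * if X j = x then 1 else 0]
  refine setIntegral_congr_fun measurableSet_Ioc fun β hβ => ?_
  simp only [stepGraphon_eq_ite, if_pos (And.intro hα hβ), empEnsemble]

lemma empNbhd_mem_subProb (hξ : ∀ i j, ξ i j ∈ Set.Icc (0 : ℝ) 1) (X : Fin N → 𝒳) (i : Fin N) :
    empNbhd ξ X i ∈ subProb 𝒳 := by
  obtain ⟨hmem, hindex⟩ := mem_block_iff.1 (right_mem_block i)
  rw [← hindex, ← nbhd_stepGraphon_empEnsemble ξ X hmem]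
  exact ((isDigraphon_stepGraphon hξ).isSubEnsemble_nbhd (isEnsemble_empEnsemble X)).mem_subProb _

lemma sum_mul_integral_l1dist_nbhd_le (hW : IsDigraphon W)
    (hξ : ∀ i j, ξ i j ∈ Set.Icc (0 : ℝ) 1)
    (hε : OpNormLE (fun α β => stepGraphon ξ α β - W α β) ε) (hν : IsEnsemble ν)
    {p : (Fin N → 𝒳) → ℝ} (hp : p ∈ simplex (Fin N → 𝒳))
    (he : ∀ g : 𝒳 → ℝ → ℝ, IsTestFunction 1 g → ∑ X, p X * |empInt g X - mfInt g ν| ≤ e) :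
    ∑ X, p X * ∫ α in Set.Ioc 0 1,
      l1dist (nbhd (stepGraphon ξ) (empEnsemble X) α) (nbhd W ν α) ≤ Fintype.card 𝒳 * (ε + e) := by
  have hint (X : Fin N → 𝒳) (x : 𝒳) :
      IntegrableOn (fun α => |nbhd W (empEnsemble X) α x - nbhd W ν α x|) (Set.Ioc 0 1) :=
    (hW.isSubEnsemble_nbhd (isEnsemble_empEnsemble X)).integrableOn_abs_sub
      (hW.isSubEnsemble_nbhd hν) x
  have hcoord (x : 𝒳) :
      ∑ X, p X * ∫ α in Set.Ioc 0 1, |nbhd W (empEnsemble X) α x - nbhd W ν α x| ≤ e := by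
    simp only [← integral_const_mul]
    rw [← integral_finsetSum _ fun X _ => (hint X x).const_mul (p X)]
    refine setIntegral_Ioc_le_of_le
      (integrable_finsetSum _ fun X _ => (hint X x).const_mul (p X)) fun α _ => ?_
    have htest := hW.isTestFunction_neighborTest α x
    simpa only [← mfInt_neighborTest, mfInt_empEnsemble htest] using he _ htest
  calc ∑ X, p X * ∫ α in Set.Ioc 0 1,
        l1dist (nbhd (stepGraphon ξ) (empEnsemble X) α) (nbhd W ν α)
      ≤ ∑ X, p X *
          ∑ x, (ε + ∫ α in Set.Ioc 0 1, |nbhd W (empEnsemble X) α x - nbhd W ν α x|) :=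
        Finset.sum_le_sum fun X _ => mul_le_mul_of_nonneg_left (integral_l1dist_nbhd_le hW
          (isDigraphon_stepGraphon hξ) hε hν (isEnsemble_empEnsemble X)) (hp.1 X)
    _ = ∑ x, (ε +
          ∑ X, p X * ∫ α in Set.Ioc 0 1, |nbhd W (empEnsemble X) α x - nbhd W ν α x|) := by
        simp only [Finset.mul_sum]
        rw [Finset.sum_comm]
        simp only [mul_add, Finset.sum_add_distrib, ← Finset.sum_mul, hp.2, one_mul]
    _ ≤ ∑ _x : 𝒳, (ε + e) := Finset.sum_le_sum fun x _ => add_le_add_right (hcoord x) ε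
    _ = Fintype.card 𝒳 * (ε + e) := by
        rw [Finset.sum_const, Finset.card_univ, nsmul_eq_mul]

end Empirical

section AgentDynamics

variable [Fintype 𝒳] [DecidableEq 𝒳] [Fintype 𝒰] {N : ℕ} {ξ : Fin N → Fin N → ℝ}
  {P : 𝒳 → 𝒰 → (𝒳 → ℝ) → 𝒳 → ℝ} {μ0 : 𝒳 → ℝ} {πs : Fin N → ℕ → 𝒳 → 𝒰 → ℝ} {L M : ℝ}
  {f : 𝒳 → ℝ → ℝ}

lemma sum_jointLaw_succ_mul (P : 𝒳 → 𝒰 → (𝒳 → ℝ) → 𝒳 → ℝ) (μ0 : 𝒳 → ℝ)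
    (ξ : Fin N → Fin N → ℝ) (πs : Fin N → ℕ → 𝒳 → 𝒰 → ℝ) (t : ℕ) (F : (Fin N → 𝒳) → ℝ) :
    ∑ Y, jointLaw P μ0 ξ πs (t + 1) Y * F Y = ∑ X, jointLaw P μ0 ξ πs t X *
      ∑ Y, (∏ i, transition P (πs i t) (empNbhd ξ X i) (X i) (Y i)) * F Y := by
  simp only [jointLaw, transition, Finset.sum_mul, Finset.mul_sum, mul_assoc]
  exact Finset.sum_comm

variable [NeZero N]

lemma jointLaw_mem_simplex (hP : IsKernel P) (hμ0 : μ0 ∈ simplex 𝒳)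
    (hξ : ∀ i j, ξ i j ∈ Set.Icc (0 : ℝ) 1) (hπs : ∀ i, IsPolicy (πs i)) (t : ℕ) :
    jointLaw P μ0 ξ πs t ∈ simplex (Fin N → 𝒳) := by
  induction t with
  | zero => exact prod_mem_simplex fun _ => hμ0
  | succ t ih =>
    exact mixture_mem_simplex ih fun X => prod_mem_simplex fun i =>
      transition_mem_simplex hP (hπs i t (X i)) (empNbhd_mem_subProb hξ X i)

variable {a : Fin N → 𝒳 → 𝒰 → ℝ} {π : ℝ → 𝒳 → 𝒰 → ℝ} {G : ℝ → 𝒳 → ℝ}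

lemma sum_prod_transition_mul_abs_empInt_sub_le [Nonempty 𝒳] (hf : IsTestFunction M f)
    (hP : IsKernel P) (hξ : ∀ i j, ξ i j ∈ Set.Icc (0 : ℝ) 1)
    (ha : ∀ i x, a i x ∈ simplex 𝒰) (X : Fin N → 𝒳) :
    ∑ Y : Fin N → 𝒳, (∏ i, transition P (a i) (empNbhd ξ X i) (X i) (Y i)) *
      |empInt f Y - mfInt f (propagate P (fun α => a (blockIndex N α))
        (nbhd (stepGraphon ξ) (empEnsemble X)) (empEnsemble X))| ≤ M / √N := by
  have hpropagate := mfInt_congr (ν := propagate P (fun α => a (blockIndex N α))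
      (nbhd (stepGraphon ξ) (empEnsemble X)) (empEnsemble X))
    (ν' := fun α => transition P (a (blockIndex N α)) (empNbhd ξ X (blockIndex N α))
      (X (blockIndex N α))) f fun α hα => by
    funext y
    simp only [propagate, nbhd_stepGraphon_empEnsemble ξ X hα, empEnsemble, ite_mul, one_mul,
      zero_mul, Finset.sum_ite_eq, Finset.mem_univ, if_true]
  rw [hpropagate]
  exact sum_prod_mul_abs_empInt_sub_le hf fun i =>
    transition_mem_simplex hP (ha i (X i)) (empNbhd_mem_subProb hξ X i)

lemma sum_prod_transition_mul_abs_empInt_sub_propagate_le [Nonempty 𝒳]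
    (hf : IsTestFunction M f) (hP : IsKernel P) (hL : KernelLipschitz P L)
    (hξ : ∀ i j, ξ i j ∈ Set.Icc (0 : ℝ) 1) (ha : ∀ i x, a i x ∈ simplex 𝒰)
    (hπ : ∀ x, IsEnsemble fun α => π α x) (hG : IsSubEnsemble G) (ν : ℝ → 𝒳 → ℝ)
    (X : Fin N → 𝒳) :
    ∑ Y : Fin N → 𝒳, (∏ i, transition P (a i) (empNbhd ξ X i) (X i) (Y i)) *
        |empInt f Y - mfInt f (propagate P π G ν)| ≤
      M / √N +
        (M * ((∫ α in Set.Ioc 0 1, ∑ x, l1dist (a (blockIndex N α) x) (π α x)) +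
            L * ∫ α in Set.Ioc 0 1, l1dist (nbhd (stepGraphon ξ) (empEnsemble X) α) (G α)) +
          |empInt (pull P π G f) X - mfInt (pull P π G f) ν|) := by
  have hX := isEnsemble_empEnsemble X
  have hpolicies (x : 𝒳) : IsEnsemble fun α => a (blockIndex N α) x :=
    ⟨fun u => (measurable_of_finite fun i => a i x u).comp measurable_blockIndex,
      fun α _ => ha (blockIndex N α) x⟩
  have hlaw := prod_mem_simplex fun i =>
    transition_mem_simplex hP (ha i (X i)) (empNbhd_mem_subProb hξ X i)
  set G' := nbhd (stepGraphon ξ) (empEnsemble X)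
  set Φ' := mfInt f (propagate P (fun α => a (blockIndex N α)) G' (empEnsemble X))
  set Φ := mfInt f (propagate P π G (empEnsemble X)) with hΦ
  have hbias : |Φ' - Φ| ≤ _ := abs_mfInt_propagate_sub_le hf hP hL hπ hpolicies hG
    ((isDigraphon_stepGraphon hξ).isSubEnsemble_nbhd hX) hX
  rw [← mfInt_propagate, ← mfInt_empEnsemble (hf.pull hP hL hπ hG) X, ← mfInt_propagate, ← hΦ]
  set Ψ := mfInt f (propagate P π G ν)
  have htriangle (Y : Fin N → 𝒳) :
      |empInt f Y - Ψ| ≤ |empInt f Y - Φ'| + (|Φ' - Φ| + |Φ - Ψ|) :=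
    (abs_sub_le _ Φ' _).trans (add_le_add_right (abs_sub_le _ _ _) _)
  refine (Finset.sum_le_sum fun Y _ =>
    mul_le_mul_of_nonneg_left (htriangle Y) (hlaw.1 Y)).trans ?_
  simp only [mul_add (∏ _, _), Finset.sum_add_distrib, ← Finset.sum_mul _ _ |Φ' - Φ|,
    ← Finset.sum_mul _ _ |Φ - Ψ|, hlaw.2, one_mul]
  gcongr
  exact sum_prod_transition_mul_abs_empInt_sub_le hf hP hξ ha X

end AgentDynamics

section Sampling

variable {N : ℕ} [NeZero N] {c : Fin N → ℝ} {φ : ℝ → ℝ} {δ L : ℝ} {D : Finset ℝ}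

lemma integral_abs_comp_blockIndex_sub_le (hφ : Measurable φ)
    (hosc : ∀ j, ∀ α ∈ Set.Ioc (0 : ℝ) 1, |c j - φ α| ≤ 1) (hδ : 0 ≤ δ) (E : Finset (Fin N))
    (hclose : ∀ j ∉ E, ∀ α ∈ block N j, |c j - φ α| ≤ δ) :
    ∫ α in Set.Ioc 0 1, |c (blockIndex N α) - φ α| ≤ δ + (N : ℝ)⁻¹ * E.card := by
  have hsample : Measurable fun α => |c (blockIndex N α) - φ α| :=
    (((measurable_of_finite c).comp measurable_blockIndex).sub hφ).abs
  have hexcept : IntegrableOn (fun α => if blockIndex N α ∈ E then (1 : ℝ) else 0) (Set.Ioc 0 1) :=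
    integrableOn_Ioc_of_abs_le (C := 1)
      ((measurable_of_finite fun j => if j ∈ E then (1 : ℝ) else 0).comp measurable_blockIndex)
      fun α _ => by split_ifs <;> simp
  have hconst : IntegrableOn (fun _ : ℝ => δ) (Set.Ioc 0 1) := integrableOn_const (by simp)
  calc ∫ α in Set.Ioc 0 1, |c (blockIndex N α) - φ α|
      ≤ ∫ α in Set.Ioc 0 1, (δ + if blockIndex N α ∈ E then 1 else 0) := by
        refine setIntegral_mono_on (integrableOn_Ioc_of_abs_le hsample fun α hα =>
          (abs_abs _).trans_le (hosc _ α hα)) (hconst.add hexcept) measurableSet_Ioc fun α hα => ?_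
        split_ifs with hE
        · linarith [hosc (blockIndex N α) α hα]
        · linarith [hclose _ hE α (mem_block_iff.2 ⟨hα, rfl⟩)]
    _ = δ + (N : ℝ)⁻¹ * E.card := by
        rw [integral_add hconst hexcept,
          setIntegral_const_comp_blockIndex fun j => if j ∈ E then (1 : ℝ) else 0]
        simp

lemma abs_right_endpoint_sub_le
    (hφ : ∀ α ∈ Set.Icc (0 : ℝ) 1, ∀ β ∈ Set.Icc (0 : ℝ) 1,
      (∀ d ∈ D, d ∉ Set.uIcc α β) → |φ α - φ β| ≤ L * |α - β|)
    {j : Fin N} (hj : j ∉ D.image (blockIndex N)) {α : ℝ} (hα : α ∈ block N j) :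
    |φ ((((j : ℕ) : ℝ) + 1) / N) - φ α| ≤ |L| * (N : ℝ)⁻¹ := by
  have hmem {β : ℝ} (hβ : β ∈ block N j) : β ∈ Set.Icc (0 : ℝ) 1 :=
    Set.Ioc_subset_Icc_self (block_subset_Ioc j hβ)
  have havoid : ∀ d ∈ D, d ∉ Set.uIcc ((((j : ℕ) : ℝ) + 1) / N) α := by
    intro d hd hdmem
    rw [Set.uIcc_of_ge hα.2] at hdmem
    exact hj (Finset.mem_image.2
      ⟨d, hd, blockIndex_eq_of_mem ⟨hα.1.trans_le hdmem.1, hdmem.2⟩⟩)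
  refine (hφ _ (hmem (right_mem_block j)) α (hmem hα) havoid).trans ?_
  refine mul_le_mul (le_abs_self L) ?_ (abs_nonneg _) (abs_nonneg _)
  rw [abs_of_nonneg (sub_nonneg.2 hα.2), sub_le_comm, inv_eq_one_div, ← sub_div,
    add_sub_cancel_right]
  exact hα.1.le

lemma integral_abs_sample_sub_le (hφ : Measurable φ)
    (hlip : ∀ α ∈ Set.Icc (0 : ℝ) 1, ∀ β ∈ Set.Icc (0 : ℝ) 1,
      (∀ d ∈ D, d ∉ Set.uIcc α β) → |φ α - φ β| ≤ L * |α - β|)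
    (hosc : ∀ j, ∀ α ∈ Set.Ioc (0 : ℝ) 1, |c j - φ α| ≤ 1) {i : Fin N}
    (hc : ∀ j ≠ i, c j = φ ((((j : ℕ) : ℝ) + 1) / N)) :
    ∫ α in Set.Ioc 0 1, |c (blockIndex N α) - φ α| ≤ (|L| + (D.card + 1)) * (N : ℝ)⁻¹ := by
  refine (integral_abs_comp_blockIndex_sub_le hφ hosc (δ := |L| * (N : ℝ)⁻¹) (by positivity)
    (insert i (D.image (blockIndex N))) fun j hj α hα => ?_).trans ?_
  · rw [Finset.mem_insert, not_or] at hj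
    rw [hc j hj.1]
    exact abs_right_endpoint_sub_le hlip hj.2 hα
  · have hcard : ((insert i (D.image (blockIndex N))).card : ℝ) ≤ D.card + 1 := by
      exact_mod_cast (Finset.card_insert_le _ _).trans (Nat.succ_le_succ Finset.card_image_le)
    rw [add_mul, mul_comm (N : ℝ)⁻¹]
    gcongr

end Sampling

section PolicySampling

variable [Fintype 𝒰] {πe : ℝ → ℕ → 𝒳 → 𝒰 → ℝ}

lemma isPolicy_update_gammaN (hπe : ∀ t x, IsEnsemble fun α => πe α t x) {N : ℕ}
    (i : Fin N) {πd : ℕ → 𝒳 → 𝒰 → ℝ} (hπd : IsPolicy πd) (j : Fin N) :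
    IsPolicy (Function.update (gammaN πe N) i πd j) := by
  obtain rfl | hji := eq_or_ne j i
  · rwa [Function.update_self]
  · rw [Function.update_of_ne hji]
    exact fun t x => (hπe t x).mem_simplex _ (block_subset_Ioc j (right_mem_block j))

variable [Fintype 𝒳]

lemma exists_integral_l1dist_update_gammaN_le (hπe : ∀ t x, IsEnsemble fun α => πe α t x)
    (hlip : EnsembleLipschitzUpTo πe) :
    ∃ K : ℝ, 0 ≤ K ∧ ∀ (N : ℕ) [NeZero N] (i : Fin N) (πd : ℕ → 𝒳 → 𝒰 → ℝ), IsPolicy πd →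
      ∀ t, ∫ α in Set.Ioc 0 1, ∑ x,
        l1dist (Function.update (gammaN πe N) i πd (blockIndex N α) t x) (πe α t x) ≤
          K * (N : ℝ)⁻¹ := by
  obtain ⟨L, D, hLD⟩ := hlip
  refine ⟨Fintype.card 𝒳 * (Fintype.card 𝒰 * (|L| + (D.card + 1))), by positivity,
    fun N _ i πd hπd t => ?_⟩
  set πs := Function.update (gammaN πe N) i πd with hπs
  have hosc (x : 𝒳) (u : 𝒰) (j : Fin N) (α : ℝ) (hα : α ∈ Set.Ioc 0 1) :
      |πs j t x u - πe α t x u| ≤ 1 :=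
    abs_sub_le_one_of_mem_subProb
      (simplex_subset_subProb (isPolicy_update_gammaN hπe i hπd j t x))
      (simplex_subset_subProb ((hπe t x).mem_simplex α hα)) u
  have hint (x : 𝒳) (u : 𝒰) :
      IntegrableOn (fun α => |πs (blockIndex N α) t x u - πe α t x u|) (Set.Ioc 0 1) :=
    integrableOn_Ioc_of_abs_le (((measurable_of_finite fun j => πs j t x u).comp
      measurable_blockIndex).sub ((hπe t x).measurable u)).abs
      fun α hα => (abs_abs _).trans_le (hosc x u _ α hα)
  simp only [l1dist]
  rw [integral_finsetSum _ fun x _ => integrable_finsetSum _ fun u _ => hint x u]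
  simp only [integral_finsetSum _ fun u _ => hint _ u]
  calc ∑ x, ∑ u, ∫ α in Set.Ioc 0 1, |πs (blockIndex N α) t x u - πe α t x u|
      ≤ ∑ _x : 𝒳, ∑ _u : 𝒰, (|L| + (D.card + 1)) * (N : ℝ)⁻¹ :=
        Finset.sum_le_sum fun x _ => Finset.sum_le_sum fun u _ =>
          integral_abs_sample_sub_le ((hπe t x).measurable u) (hLD t x u) (hosc x u)
            fun j hj => by rw [hπs, Function.update_of_ne hj, gammaN]
    _ = Fintype.card 𝒳 * (Fintype.card 𝒰 * (|L| + (D.card + 1))) * (N : ℝ)⁻¹ := by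
        simp only [Finset.sum_const, Finset.card_univ, nsmul_eq_mul, mul_assoc]

/-- An `N`-agent system whose weights `ξ` and policies `πs` approximate the limiting graphon and
policy ensemble up to an error `r`, which also dominates the sampling error `1/√N`. -/
structure IsAgentApproximation {N : ℕ} [NeZero N] (W : ℝ → ℝ → ℝ) (πe : ℝ → ℕ → 𝒳 → 𝒰 → ℝ)
    (ξ : Fin N → Fin N → ℝ) (πs : Fin N → ℕ → 𝒳 → 𝒰 → ℝ) (r : ℝ) : Prop where
  mem_Icc : ∀ i j, ξ i j ∈ Set.Icc (0 : ℝ) 1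
  isPolicy : ∀ i, IsPolicy (πs i)
  opNormLE : OpNormLE (fun α β => stepGraphon ξ α β - W α β) r
  policy_le : ∀ t, ∫ α in Set.Ioc 0 1, ∑ x, l1dist (πs (blockIndex N α) t x) (πe α t x) ≤ r
  inv_sqrt_le : (√N)⁻¹ ≤ r

lemma inv_natCast_le_inv_sqrt (N : ℕ) : (N : ℝ)⁻¹ ≤ (√N)⁻¹ := by
  obtain rfl | hN := N.eq_zero_or_pos
  · simp
  · have hone : (1 : ℝ) ≤ √N := Real.one_le_sqrt.2 (by exact_mod_cast hN)
    refine inv_anti₀ (by positivity) ?_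
    calc √N ≤ √N * √N := le_mul_of_one_le_left (by positivity) hone
      _ = N := Real.mul_self_sqrt (by positivity)

lemma exists_isAgentApproximation_update_gammaN {W : ℝ → ℝ → ℝ}
    (hπe : ∀ t x, IsEnsemble fun α => πe α t x) (hlip : EnsembleLipschitzUpTo πe) :
    ∃ K : ℝ, 0 ≤ K ∧ ∀ (N : ℕ) [NeZero N] (ξ : Fin N → Fin N → ℝ) (ε : ℝ),
      (∀ i j, ξ i j ∈ Set.Icc (0 : ℝ) 1) →
      OpNormLE (fun α β => stepGraphon ξ α β - W α β) ε →
      ∀ (i : Fin N) (πd : ℕ → 𝒳 → 𝒰 → ℝ), IsPolicy πd →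
        IsAgentApproximation W πe ξ (Function.update (gammaN πe N) i πd)
          (ε + (K + 1) * (√N)⁻¹) := by
  obtain ⟨K, hK, hKbound⟩ := exists_integral_l1dist_update_gammaN_le hπe hlip
  refine ⟨K, hK, fun N _ ξ ε hξ hε i πd hπd => ?_⟩
  have hε0 := hε.nonneg
  have hsqrt : 0 ≤ (√N)⁻¹ := by positivity
  have hmul := mul_nonneg hK hsqrt
  refine ⟨hξ, isPolicy_update_gammaN hπe i hπd, hε.mono (by linarith), fun t => ?_,
    by linarith⟩
  have := mul_le_mul_of_nonneg_left (inv_natCast_le_inv_sqrt N) hK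
  linarith [hKbound N i πd hπd t]

end PolicySampling

section MeanField

variable [Fintype 𝒳] [Fintype 𝒰] {P : 𝒳 → 𝒰 → (𝒳 → ℝ) → 𝒳 → ℝ} {W : ℝ → ℝ → ℝ} {μ0 : 𝒳 → ℝ}
  {πe : ℝ → ℕ → 𝒳 → 𝒰 → ℝ} {μ : ℕ → ℝ → 𝒳 → ℝ} {L : ℝ}

lemma KernelLipschitz.abs (hL : KernelLipschitz P L) : KernelLipschitz P |L| :=
  fun x u p q hp hq => (hL x u p q hp hq).trans
    (mul_le_mul_of_nonneg_right (le_abs_self L) (l1dist_nonneg p q))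

lemma IsMeanFieldOf.isEnsemble (hμ : IsMeanFieldOf W P μ0 πe μ) (hP : IsKernel P)
    (hμ0 : μ0 ∈ simplex 𝒳) (hW : IsDigraphon W) (hπe : ∀ t x, IsEnsemble fun α => πe α t x)
    (t : ℕ) : IsEnsemble (μ t) := by
  refine ⟨hμ.1 t, ?_⟩
  induction t with
  | zero =>
    intro α hα
    rwa [hμ.2.1 α (Set.Ioc_subset_Icc_self hα)]
  | succ t ih =>
    intro α hα
    rw [funext (hμ.2.2 t α (Set.Ioc_subset_Icc_self hα))]
    exact mixture_mem_simplex (ih α hα) fun x =>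
      transition_mem_simplex hP ((hπe t x).mem_simplex α hα)
        ((hW.isSubEnsemble_nbhd ⟨hμ.1 t, ih⟩).mem_subProb α)

lemma IsMeanFieldOf.mfInt_succ (hμ : IsMeanFieldOf W P μ0 πe μ) (t : ℕ) (f : 𝒳 → ℝ → ℝ) :
    mfInt f (μ (t + 1)) = mfInt f (propagate P (fun α => πe α t) (nbhd W (μ t)) (μ t)) :=
  mfInt_congr f fun α hα => funext (hμ.2.2 t α (Set.Ioc_subset_Icc_self hα))

end MeanField

section MeanError

variable [Fintype 𝒳] [DecidableEq 𝒳] [Fintype 𝒰] {P : 𝒳 → 𝒰 → (𝒳 → ℝ) → 𝒳 → ℝ}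
  {W : ℝ → ℝ → ℝ} {μ0 : 𝒳 → ℝ} {πe : ℝ → ℕ → 𝒳 → 𝒰 → ℝ} {μ : ℕ → ℝ → 𝒳 → ℝ} {L M e r : ℝ}

/-- The expected error `E[|𝛍ᴺ_t(f) - 𝛍_t(f)|]` of the `N`-agent system at time `t`. -/
noncomputable def meanError {N : ℕ} (P : 𝒳 → 𝒰 → (𝒳 → ℝ) → 𝒳 → ℝ) (μ0 : 𝒳 → ℝ)
    (ξ : Fin N → Fin N → ℝ) (πs : Fin N → ℕ → 𝒳 → 𝒰 → ℝ) (μ : ℕ → ℝ → 𝒳 → ℝ) (t : ℕ)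
    (f : 𝒳 → ℝ → ℝ) : ℝ :=
  ∑ X : Fin N → 𝒳, jointLaw P μ0 ξ πs t X * |empInt f X - mfInt f (μ t)|

variable {N : ℕ} [NeZero N] {ξ : Fin N → Fin N → ℝ} {πs : Fin N → ℕ → 𝒳 → 𝒰 → ℝ}

lemma meanError_zero_le [Nonempty 𝒳] {f : 𝒳 → ℝ → ℝ} (hf : IsTestFunction M f)
    (hμ0 : μ0 ∈ simplex 𝒳) (hμ : IsMeanFieldOf W P μ0 πe μ)
    (h : IsAgentApproximation W πe ξ πs r) : meanError P μ0 ξ πs μ 0 f ≤ M * r := by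
  rw [meanError, mfInt_congr f fun α hα => hμ.2.1 α (Set.Ioc_subset_Icc_self hα)]
  exact (sum_prod_mul_abs_empInt_sub_le hf fun _ => hμ0).trans
    (mul_le_mul_of_nonneg_left h.inv_sqrt_le hf.nonneg)

lemma meanError_succ_le [Nonempty 𝒳] {f : 𝒳 → ℝ → ℝ} (hf : IsTestFunction M f)
    (hP : IsKernel P) (hL : KernelLipschitz P L) (hL0 : 0 ≤ L) (hμ0 : μ0 ∈ simplex 𝒳)
    (hW : IsDigraphon W) (hπe : ∀ t x, IsEnsemble fun α => πe α t x)
    (hμ : IsMeanFieldOf W P μ0 πe μ) (h : IsAgentApproximation W πe ξ πs r) {t : ℕ}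
    (he : ∀ g, IsTestFunction 1 g → meanError P μ0 ξ πs μ t g ≤ e) :
    meanError P μ0 ξ πs μ (t + 1) f ≤
      M * r + M * (r + L * (Fintype.card 𝒳 * (r + e))) +
        meanError P μ0 ξ πs μ t (pull P (fun α => πe α t) (nbhd W (μ t)) f) := by
  have hμt := hμ.isEnsemble hP hμ0 hW hπe t
  have hlaw := jointLaw_mem_simplex hP hμ0 h.mem_Icc h.isPolicy t
  set g := pull P (fun α => πe α t) (nbhd W (μ t)) f
  set p := jointLaw P μ0 ξ πs t
  set D : (Fin N → 𝒳) → ℝ := fun X => ∫ α in Set.Ioc 0 1,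
    l1dist (nbhd (stepGraphon ξ) (empEnsemble X) α) (nbhd W (μ t) α)
  have hstep (X : Fin N → 𝒳) :
      ∑ Y : Fin N → 𝒳, (∏ i, transition P (πs i t) (empNbhd ξ X i) (X i) (Y i)) *
          |empInt f Y - mfInt f (μ (t + 1))| ≤
        M * r + (M * (r + L * D X) + |empInt g X - mfInt g (μ t)|) := by
    rw [hμ.mfInt_succ]
    refine (sum_prod_transition_mul_abs_empInt_sub_propagate_le hf hP hL h.mem_Icc
      (fun i => h.isPolicy i t) (hπe t) (hW.isSubEnsemble_nbhd hμt) (μ t) X).trans ?_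
    have hM := hf.nonneg
    rw [div_eq_mul_inv]
    gcongr
    · exact h.inv_sqrt_le
    · exact h.policy_le t
  calc meanError P μ0 ξ πs μ (t + 1) f
      ≤ ∑ X, p X * (M * r + (M * (r + L * D X) + |empInt g X - mfInt g (μ t)|)) := by
        rw [meanError, sum_jointLaw_succ_mul]
        exact Finset.sum_le_sum fun X _ => mul_le_mul_of_nonneg_left (hstep X) (hlaw.1 X)
    _ = M * r + M * (r + L * ∑ X, p X * D X) + meanError P μ0 ξ πs μ t g := by
        have haffine (X : Fin N → 𝒳) :
            p X * (M * r + (M * (r + L * D X) + |empInt g X - mfInt g (μ t)|)) =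
              (M * r + M * r) * p X + M * L * (p X * D X) +
                p X * |empInt g X - mfInt g (μ t)| := by ring
        simp only [haffine, Finset.sum_add_distrib, ← Finset.mul_sum, hlaw.2, meanError]
        ring
    _ ≤ M * r + M * (r + L * (Fintype.card 𝒳 * (r + e))) + meanError P μ0 ξ πs μ t g := by
        have hM := hf.nonneg
        gcongr
        exact sum_mul_integral_l1dist_nbhd_le hW h.mem_Icc h.opNormLE hμt hlaw he

theorem exists_meanError_le [Nonempty 𝒳] (hP : IsKernel P) (hL : KernelLipschitz P L)
    (hμ0 : μ0 ∈ simplex 𝒳) (hW : IsDigraphon W) (hπe : ∀ t x, IsEnsemble fun α => πe α t x)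
    (hμ : IsMeanFieldOf W P μ0 πe μ) (t : ℕ) :
    ∃ C : ℝ, 0 ≤ C ∧ ∀ (N : ℕ) [NeZero N] (ξ : Fin N → Fin N → ℝ)
      (πs : Fin N → ℕ → 𝒳 → 𝒰 → ℝ) (r : ℝ), IsAgentApproximation W πe ξ πs r →
      ∀ (M : ℝ) (f : 𝒳 → ℝ → ℝ), IsTestFunction M f →
        meanError P μ0 ξ πs μ t f ≤ M * (C * r) := by
  induction t with
  | zero =>
    refine ⟨1, zero_le_one, fun N _ ξ πs r h M f hf => ?_⟩
    rw [one_mul]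
    exact meanError_zero_le hf hμ0 hμ h
  | succ t ih =>
    obtain ⟨C, hC, hCbound⟩ := ih
    refine ⟨2 + |L| * Fintype.card 𝒳 * (1 + C) + C, by positivity,
      fun N _ ξ πs r h M f hf => ?_⟩
    have hpull := hf.pull hP hL (hπe t)
      (hW.isSubEnsemble_nbhd (hμ.isEnsemble hP hμ0 hW hπe t))
    have hstep := meanError_succ_le (e := C * r) hf hP hL.abs (abs_nonneg L) hμ0 hW hπe hμ h
      fun g hg => (hCbound N ξ πs r h 1 g hg).trans_eq (one_mul _)
    calc meanError P μ0 ξ πs μ (t + 1) f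
        ≤ M * r + M * (r + |L| * (Fintype.card 𝒳 * (r + C * r))) + M * (C * r) :=
          hstep.trans (add_le_add_right (hCbound N ξ πs r h M _ hpull) _)
      _ = M * ((2 + |L| * Fintype.card 𝒳 * (1 + C) + C) * r) := by ring

end MeanError

section Convergence

variable [Fintype 𝒳] [DecidableEq 𝒳] [Fintype 𝒰] {P : 𝒳 → 𝒰 → (𝒳 → ℝ) → 𝒳 → ℝ} {L : ℝ}
  {μ0 : 𝒳 → ℝ} {W : ℝ → ℝ → ℝ} {πe : ℝ → ℕ → 𝒳 → 𝒰 → ℝ} {μ : ℕ → ℝ → 𝒳 → ℝ}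

theorem exists_meanError_update_gammaN_le [Nonempty 𝒳] (hμ0 : μ0 ∈ simplex 𝒳) (hP : IsKernel P)
    (hL : KernelLipschitz P L) (hW : IsDigraphon W)
    (hπe : ∀ t x, IsEnsemble fun α => πe α t x) (hlip : EnsembleLipschitzUpTo πe)
    (hμ : IsMeanFieldOf W P μ0 πe μ) (t : ℕ) :
    ∃ C : ℝ, 0 ≤ C ∧ ∀ (N : ℕ) (ξ : Fin N → Fin N → ℝ) (ε : ℝ),
      (∀ i j, ξ i j ∈ Set.Icc (0 : ℝ) 1) →
      OpNormLE (fun α β => stepGraphon ξ α β - W α β) ε →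
      ∀ (M : ℝ) (f : 𝒳 → ℝ → ℝ), IsTestFunction M f →
      ∀ (i : Fin N) (πd : ℕ → 𝒳 → 𝒰 → ℝ), IsPolicy πd →
        meanError P μ0 ξ (Function.update (gammaN πe N) i πd) μ t f ≤
          M * (C * (ε + (√N)⁻¹)) := by
  obtain ⟨C, hC, hCbound⟩ := exists_meanError_le hP hL hμ0 hW hπe hμ t
  obtain ⟨K, hK, happrox⟩ := exists_isAgentApproximation_update_gammaN (W := W) hπe hlip
  refine ⟨C * (K + 1), by positivity, fun N ξ ε hξ hε M f hf i πd hπd => ?_⟩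
  have : NeZero N := ⟨i.pos.ne'⟩
  refine (hCbound N ξ _ _ (happrox N ξ ε hξ hε i πd hπd) M f hf).trans ?_
  have hM := hf.nonneg
  have hKε := mul_nonneg hK hε.nonneg
  rw [mul_assoc C]
  gcongr
  linarith

theorem empirical_mean_field_convergence_general (hμ0 : μ0 ∈ simplex 𝒳) (hP : IsKernel P)
    (hL : KernelLipschitz P L) (hW : IsDigraphon W) {ξ : (N : ℕ) → Fin N → Fin N → ℝ}
    (hξ : ∀ N i j, ξ N i j ∈ Set.Icc (0 : ℝ) 1) (hπe : ∀ t x, IsEnsemble fun α => πe α t x)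
    (hlip : EnsembleLipschitzUpTo πe) (hμ : IsMeanFieldOf W P μ0 πe μ) (t : ℕ) (M : ℝ) :
    (OpConvergesTo (fun N => stepGraphon (ξ N)) W → ∀ ε > (0 : ℝ), ∃ N₀ : ℕ, ∀ N > N₀,
      ∀ f : 𝒳 → ℝ → ℝ, IsTestFunction M f → ∀ (i : Fin N) (πd : ℕ → 𝒳 → 𝒰 → ℝ), IsPolicy πd →
        meanError P μ0 (ξ N) (Function.update (gammaN πe N) i πd) μ t f ≤ ε) ∧
    (OpRateSqrt (fun N => stepGraphon (ξ N)) W → ∃ C : ℝ, ∀ N : ℕ, 1 ≤ N →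
      ∀ f : 𝒳 → ℝ → ℝ, IsTestFunction M f → ∀ (i : Fin N) (πd : ℕ → 𝒳 → 𝒰 → ℝ), IsPolicy πd →
        meanError P μ0 (ξ N) (Function.update (gammaN πe N) i πd) μ t f ≤ C / √N) := by
  have : Nonempty 𝒳 := by
    by_contra h
    have := not_nonempty_iff.1 h
    simpa using hμ0.2
  obtain ⟨C, hC, hbound⟩ := exists_meanError_update_gammaN_le hμ0 hP hL hW hπe hlip hμ t
  refine ⟨fun hconv ε hε => ?_, fun ⟨R, hR⟩ => ⟨M * (C * (R + 1)), fun N hN f hf i πd hπd => ?_⟩⟩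
  · have hlim : Tendsto (fun δ : ℝ => M * (C * (δ + δ))) (nhdsWithin 0 (Set.Ioi 0)) (nhds 0) :=
      tendsto_nhdsWithin_of_tendsto_nhds (Continuous.tendsto' (by fun_prop) _ _ (by simp))
    obtain ⟨δ, hδε, hδ⟩ :=
      ((hlim.eventually (gt_mem_nhds hε)).and self_mem_nhdsWithin).exists
    obtain ⟨N₁, hN₁⟩ := hconv δ hδ
    have hsqrt : Tendsto (fun N : ℕ => (√N)⁻¹) atTop (nhds 0) :=
      tendsto_inv_atTop_zero.comp (Real.tendsto_sqrt_atTop.comp tendsto_natCast_atTop_atTop)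
    obtain ⟨N₂, hN₂⟩ := eventually_atTop.1 (hsqrt.eventually (gt_mem_nhds hδ))
    refine ⟨max N₁ N₂, fun N hN f hf i πd hπd => ?_⟩
    obtain ⟨hNN₁, hNN₂⟩ := max_lt_iff.1 hN
    refine (hbound N (ξ N) δ (hξ N) (hN₁ N hNN₁.le) M f hf i πd hπd).trans (le_trans ?_ hδε.le)
    have hM := hf.nonneg
    gcongr
    exact (hN₂ N hNN₂.le).le
  · refine (hbound N (ξ N) (R / √N) (hξ N) (hR N hN) M f hf i πd hπd).trans_eq ?_
    ring

end Convergence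

/-- propagation of chaos for the empirical step measure ensemble. Under
Assumption (W) and Lipschitz continuity of P, for the N-agent policy
(π¹,…,π^{i−1},π̂,π^{i+1},…,π^N) with (π¹,…,π^N) = Γ_N(𝛑) and any deviation π̂ of agent i,
for every t ∈ 𝒯 and measurable f : 𝒳×[0,1] → ℝ with |f| ≤ M_f:
E[|𝛍^N_t(f) − 𝛍_t(f)|] → 0 as N → ∞, uniformly over all deviations π̂ ∈ Π and i ∈ 𝒱_N;
moreover, if ‖W_N − W‖_{L∞→L1} → 0 at rate O(1/√N), so does this convergence. -/
theorem empirical_mean_field_convergence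
    {𝒳 𝒰 : Type*} [Fintype 𝒳] [DecidableEq 𝒳] [Nonempty 𝒳] [Fintype 𝒰] [Nonempty 𝒰]
    (T : ℕ) (μ0 : 𝒳 → ℝ) (hμ0 : μ0 ∈ simplex 𝒳)
    (P : 𝒳 → 𝒰 → (𝒳 → ℝ) → 𝒳 → ℝ) (hP : IsKernel P)
    (LP : ℝ) (hPLip : KernelLipschitz P LP)
    (W : ℝ → ℝ → ℝ) (hW : IsGraphon W)
    (ξ : (N : ℕ) → Fin N → Fin N → ℝ) (hξ : ∀ N, IsEdgeWeights (ξ N))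
    (hWconv : OpConvergesTo (fun N => stepGraphon (ξ N)) W)
    (πe : ℝ → ℕ → 𝒳 → 𝒰 → ℝ)
    (hπe : ∀ α ∈ Set.Icc (0:ℝ) 1, IsPolicy (πe α))
    (hπemeas : ∀ t x u, Measurable fun α => πe α t x u)
    (hπeLip : EnsembleLipschitzUpTo πe)
    (μ : ℕ → ℝ → 𝒳 → ℝ) (hμ : IsMeanFieldOf W P μ0 πe μ) :
    (∀ t < T, ∀ (Mf : ℝ) (f : 𝒳 → ℝ → ℝ), (∀ x, Measurable (f x)) → (∀ x α, |f x α| ≤ Mf) →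
      ∀ ε > (0:ℝ), ∃ N₀ : ℕ, ∀ N > N₀, ∀ (i : Fin N) (πd : ℕ → 𝒳 → 𝒰 → ℝ), IsPolicy πd →
        (∑ X : Fin N → 𝒳,
            jointLaw P μ0 (ξ N) (Function.update (gammaN πe N) i πd) t X *
              |empInt f X - mfInt f (μ t)|) ≤ ε) ∧
    (OpRateSqrt (fun N => stepGraphon (ξ N)) W →
      ∀ t < T, ∀ (Mf : ℝ) (f : 𝒳 → ℝ → ℝ), (∀ x, Measurable (f x)) → (∀ x α, |f x α| ≤ Mf) →
        ∃ C : ℝ, ∀ N : ℕ, 1 ≤ N → ∀ (i : Fin N) (πd : ℕ → 𝒳 → 𝒰 → ℝ), IsPolicy πd →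
          (∑ X : Fin N → 𝒳,
              jointLaw P μ0 (ξ N) (Function.update (gammaN πe N) i πd) t X *
                |empInt f X - mfInt f (μ t)|) ≤ C / Real.sqrt N) := by
  have hπens (t : ℕ) (x : 𝒳) : IsEnsemble fun α => πe α t x :=
    ⟨hπemeas t x, fun α hα => hπe α (Set.Ioc_subset_Icc_self hα) t x⟩
  have hweights (N : ℕ) (i j : Fin N) : ξ N i j ∈ Set.Icc (0 : ℝ) 1 := by
    rcases (hξ N).1 i j with h | h <;> simp [h]
  have hgen := empirical_mean_field_convergence_general hμ0 hP hPLip ⟨hW.1, hW.2.2⟩ hweights hπens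
    hπeLip hμ
  refine ⟨fun t _ Mf f hf hfM ε hε => ?_, fun hrate t _ Mf f hf hfM => ?_⟩
  · obtain ⟨N₀, hN₀⟩ := (hgen t Mf).1 hWconv ε hε
    exact ⟨N₀, fun N hN => hN₀ N hN f ⟨hf, fun x α _ => hfM x α⟩⟩
  · obtain ⟨C, hC⟩ := (hgen t Mf).2 hrate
    exact ⟨C, fun N hN => hC N hN f ⟨hf, fun x α _ => hfM x α⟩⟩


end GMFG
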